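/- arXiv:2212.02986 — 3 statements merged into one kernel-verified Lean document; each statement's English description precedes it below -/
import Mathlib

section
/- $\sum_{n=1}^{\infty} \frac{(-1)^n}{n^3 \binom{2n}{n}}\left(110 \sum_{j=1}^{n} \frac{(-1)^j}{j^4} + \frac{29(-1)^n}{n^4}\right) = \frac{221\pi^4 \zeta(3)}{180} + \frac{223\,\zeta(7)}{24} - \frac{301\pi^2 \zeta(5)}{36}$. -/
open Filter Topology

/-- Alternating harmonic-type sum `∑_{j=1}^n (-1)^j / j^s`. -/
noncomputable def A (s n : ℕ) : ℝ := ∑ j ∈ Finset.range n, (-1:ℝ)^(j+1) / ((j:ℝ) + 1) ^ s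

/-- The Riemann zeta value `ζ(s) = ∑_{n ≥ 1} 1/n^s`. -/
noncomputable def zeta (s : ℕ) : ℝ := ∑' n : ℕ, 1 / ((n:ℝ) + 1) ^ s

/-!
Write the series as a combination of sums whose largest index carries a central binomial
coefficient in the denominator. Such sums are the diagonal terms that appear when one sums by parts
in a connected sum of Seki and Yamamoto: two nested harmonic sums whose largest indices `n > k` are
coupled by a kernel. With the kernel `1 / C(n + k, k)` the process turns a multiple zeta value
completely into sums with central binomial coefficients; with the kernel of Apéry's proof it
produces relations that also involve signs. All boundary terms are `O(log(N)^r / N)`. Together with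
the double shuffle relations between alternating Euler sums, there are enough relations in weight
`7` to express the series by products of (alternating) zeta values. The rational combination of
relations that does so is given explicitly, and its verification is a finite computation with
integer coefficients.
-/

namespace AperySum

open Finset

section QuasiShuffle

variable {α : Type*}

/-- One level of the recursion for `quasiShuffle`: the head `a` and tail `u` of the first word are
fixed, and `shuffleTail` is the quasi-shuffle product by `u`. Splitting it off keeps both recursions
structural, so that the product can be evaluated by the kernel. -/
def quasiShuffleCons (merge : α → α → List α) (a : α) (u : List α)
    (shuffleTail : List α → List (List α)) : List α → List (List α)
  | [] => [a :: u]
  | b :: v => (shuffleTail (b :: v)).map (a :: ·) ++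
      (quasiShuffleCons merge a u shuffleTail v).map (b :: ·) ++
      (merge a b).flatMap fun c => (shuffleTail v).map (c :: ·)

/-- Hoffman's quasi-shuffle product of two words, as a list of words with multiplicities: two
colliding letters `a` and `b` may also be replaced by any letter of `merge a b`. -/
def quasiShuffle (merge : α → α → List α) : List α → List α → List (List α)
  | [], v => [v]
  | a :: u, v => quasiShuffleCons merge a u (quasiShuffle merge u) v

@[simp] lemma quasiShuffle_nil_left (merge : α → α → List α) (v : List α) :
    quasiShuffle merge [] v = [v] := rfl

@[simp] lemma quasiShuffle_nil_right (merge : α → α → List α) (u : List α) :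
    quasiShuffle merge u [] = [u] := by
  cases u <;> rfl

lemma quasiShuffle_cons_cons (merge : α → α → List α) (a b : α) (u v : List α) :
    quasiShuffle merge (a :: u) (b :: v) =
      (quasiShuffle merge u (b :: v)).map (a :: ·) ++
      (quasiShuffle merge (a :: u) v).map (b :: ·) ++
      (merge a b).flatMap fun c => (quasiShuffle merge u v).map (c :: ·) := rfl

end QuasiShuffle

/-! ### Nested sums -/

/-- The letter of a nested sum that stands for the sequence `n ↦ 1 / n ^ exponent`, or for
`n ↦ (-1) ^ n / n ^ exponent` if it is alternating. -/
structure Letter where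
  exponent : ℕ
  alternating : Bool
  deriving DecidableEq

namespace Letter

/-- The numeral `s` is the letter of the sequence `n ↦ 1 / n ^ s`. -/
instance (s : ℕ) : OfNat Letter s := ⟨⟨s, false⟩⟩

/-- Negation toggles the sign `(-1) ^ n`; in particular `-0` is a pure sign. -/
instance : Neg Letter := ⟨fun a => ⟨a.exponent, !a.alternating⟩⟩

/-- The sum of two letters stands for the product of their sequences. -/
instance : Add Letter :=
  ⟨fun a b => ⟨a.exponent + b.exponent, a.alternating ^^ b.alternating⟩⟩

@[simp] lemma exponent_one : exponent 1 = 1 := rfl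

@[simp] lemma exponent_neg (a : Letter) : (-a).exponent = a.exponent := rfl

@[simp] lemma exponent_add (a b : Letter) : (a + b).exponent = a.exponent + b.exponent := rfl

/-- The `n`-th term of the sequence denoted by a letter; it is `0` at `n = 0` if the exponent is
positive. -/
noncomputable def value (a : Letter) (n : ℕ) : ℝ :=
  (bif a.alternating then (-1) ^ n else 1) * (n : ℝ)⁻¹ ^ a.exponent

@[simp] lemma value_add (a b : Letter) (n : ℕ) : (a + b).value n = a.value n * b.value n := by
  change (bif a.alternating ^^ b.alternating then _ else _) * _ ^ (a.exponent + b.exponent) = _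
  simp only [value, pow_add]
  have sign_sq : (-1 : ℝ) ^ n * (-1) ^ n = 1 := by simp [← mul_pow]
  cases a.alternating <;> cases b.alternating <;> grind

@[simp] lemma value_neg (a : Letter) (n : ℕ) : (-a).value n = (-1) ^ n * a.value n := by
  change (bif !a.alternating then _ else _) * _ ^ a.exponent = _
  cases h : a.alternating <;> simp [value, h, ← mul_assoc, ← mul_pow]

lemma value_ofNat (s n : ℕ) : value (OfNat.ofNat s) n = (n : ℝ)⁻¹ ^ s :=
  one_mul _

@[simp] lemma value_one (n : ℕ) : value 1 n = (n : ℝ)⁻¹ :=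
  (value_ofNat 1 n).trans (pow_one _)

lemma abs_value (a : Letter) (n : ℕ) : |a.value n| = (n : ℝ)⁻¹ ^ a.exponent := by
  obtain ⟨s, _ | _⟩ := a <;> simp [value, abs_mul]

end Letter

/-- The contribution of the largest index `n` to the nested sum of a word. The empty word is
concentrated at `n = 0`, which makes the recursion uniform. -/
noncomputable def summand : List Letter → ℕ → ℝ
  | [], n => if n = 0 then 1 else 0
  | a :: w, n => a.value n * ∑ m ∈ range n, summand w m

/-- The truncated multiple harmonic sum
`∑_{N > n₁ > ⋯ > n_r > 0} a₁(n₁) ⋯ a_r(n_r)` of the word `a₁ ⋯ a_r`. -/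
noncomputable def nestedSum (w : List Letter) (N : ℕ) : ℝ := ∑ n ∈ range N, summand w n

lemma summand_cons (a : Letter) (w : List Letter) (n : ℕ) :
    summand (a :: w) n = a.value n * nestedSum w n := rfl

@[simp] lemma summand_cons_zero (a : Letter) (w : List Letter) : summand (a :: w) 0 = 0 := by
  simp [summand]

@[simp] lemma nestedSum_zero (w : List Letter) : nestedSum w 0 = 0 := rfl

lemma nestedSum_succ (w : List Letter) (n : ℕ) :
    nestedSum w (n + 1) = nestedSum w n + summand w n :=
  sum_range_succ _ _

lemma nestedSum_nil {N : ℕ} (hN : N ≠ 0) : nestedSum [] N = 1 := by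
  simp [nestedSum, summand, hN, Nat.pos_iff_ne_zero]

lemma summand_modifyHead_neg (w : List Letter) (n : ℕ) :
    summand (w.modifyHead (-·)) n = (-1) ^ n * summand w n := by
  cases w with
  | nil => rcases eq_or_ne n 0 with rfl | hn <;> simp [summand, *]
  | cons a w => simp [summand_cons, mul_assoc]

lemma summand_modifyHead_add (c : Letter) (v : List Letter) {n : ℕ} (hn : n ≠ 0) :
    summand (v.modifyHead (· + c)) n = c.value n * summand v n := by
  cases v with
  | nil => simp [summand, hn]
  | cons x v => simp [summand_cons, mul_assoc, mul_left_comm]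

/-- The quasi-shuffle product of words of letters, in which colliding letters are added. -/
abbrev stuffle : List Letter → List Letter → List (List Letter) :=
  quasiShuffle fun a b => [a + b]

lemma summand_stuffle_cons_cons (a b : Letter) (u v : List Letter) (n : ℕ) :
    ((stuffle (a :: u) (b :: v)).map (summand · n)).sum =
      a.value n * ((stuffle u (b :: v)).map (nestedSum · n)).sum +
      b.value n * ((stuffle (a :: u) v).map (nestedSum · n)).sum +
      (a + b).value n * ((stuffle u v).map (nestedSum · n)).sum := by
  simp [stuffle, quasiShuffle_cons_cons, Function.comp_def, summand_cons, List.sum_map_mul_left,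
    add_assoc]

lemma nestedSum_mul (u v : List Letter) (N : ℕ) :
    nestedSum u N * nestedSum v N = ((stuffle u v).map (nestedSum · N)).sum := by
  induction u generalizing v N with
  | nil => rcases eq_or_ne N 0 with rfl | hN <;> simp [nestedSum_nil, *]
  | cons a u ihu =>
    induction v generalizing N with
    | nil => rcases eq_or_ne N 0 with rfl | hN <;> simp [nestedSum_nil, *]
    | cons b v ihv =>
      induction N with
      | zero => simp
      | succ n ih =>
        simp only [nestedSum_succ, List.sum_map_add, ← ih, summand_stuffle_cons_cons, ← ihu, ← ihv,
          Letter.value_add, summand_cons]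
        ring

/-! ### Growth of nested sums -/

/-- The rate of growth of the harmonic sums, in a form that is at least `1` everywhere. -/
noncomputable def logGrowth (N : ℕ) : ℝ := 1 + Real.log N

lemma one_le_logGrowth (N : ℕ) : 1 ≤ logGrowth N :=
  le_add_of_nonneg_right (Real.log_natCast_nonneg N)

lemma logGrowth_nonneg (N : ℕ) : 0 ≤ logGrowth N :=
  zero_le_one.trans (one_le_logGrowth N)

lemma logGrowth_mono : Monotone logGrowth := by
  intro m n hmn
  rcases m.eq_zero_or_pos with rfl | hm
  · simpa [logGrowth] using Real.log_natCast_nonneg n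
  · exact add_le_add_right (Real.log_le_log (by exact_mod_cast hm) (by exact_mod_cast hmn)) 1

lemma sum_range_inv_le_logGrowth (N : ℕ) : ∑ m ∈ range N, (m : ℝ)⁻¹ ≤ logGrowth N :=
  calc ∑ m ∈ range N, (m : ℝ)⁻¹ ≤ ∑ m ∈ range (N + 1), (m : ℝ)⁻¹ :=
        sum_le_sum_of_subset_of_nonneg (range_mono N.le_succ) fun _ _ _ => by positivity
    _ = (harmonic N : ℝ) := by simp [sum_range_succ', harmonic]
    _ ≤ logGrowth N := harmonic_le_one_add_log N

lemma tendsto_logGrowth_pow_div (k : ℕ) :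
    Tendsto (fun N : ℕ => logGrowth N ^ k / N) atTop (𝓝 0) := by
  have scaled : Tendsto (fun N : ℕ => Real.exp 1 * (N : ℝ)) atTop atTop :=
    tendsto_natCast_atTop_atTop.const_mul_atTop (Real.exp_pos 1)
  have limit := ((Real.isLittleO_pow_log_id_atTop (n := k)).tendsto_div_nhds_zero.comp
    scaled).const_mul (Real.exp 1)
  rw [mul_zero] at limit
  refine limit.congr' ?_
  filter_upwards [eventually_ne_atTop 0] with N hN
  have hN' : (N : ℝ) ≠ 0 := by exact_mod_cast hN
  simp only [Function.comp_apply, id_eq, logGrowth,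
    Real.log_mul (Real.exp_ne_zero 1) hN', Real.log_exp]
  field_simp

/-- All exponents of the word are positive, so that no letter is a pure sign. -/
def HasPosExponents (w : List Letter) : Prop := ∀ a ∈ w, 0 < a.exponent

instance (w : List Letter) : Decidable (HasPosExponents w) :=
  inferInstanceAs (Decidable (∀ a ∈ w, 0 < a.exponent))

lemma hasPosExponents_cons {a : Letter} {w : List Letter} :
    HasPosExponents (a :: w) ↔ 0 < a.exponent ∧ HasPosExponents w :=
  List.forall_mem_cons

lemma sum_abs_summand_le {w : List Letter} (hw : HasPosExponents w) (N : ℕ) :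
    ∑ n ∈ range N, |summand w n| ≤ logGrowth N ^ w.length := by
  induction w generalizing N with
  | nil => rcases eq_or_ne N 0 with rfl | hN <;> simp [summand, apply_ite, Nat.pos_iff_ne_zero, *]
  | cons a w ih =>
    obtain ⟨ha, hw⟩ := hasPosExponents_cons.1 hw
    have term_le (n : ℕ) (hn : n ∈ range N) :
        |summand (a :: w) n| ≤ (n : ℝ)⁻¹ * logGrowth N ^ w.length := by
      rw [summand_cons, abs_mul, a.abs_value]
      gcongr
      · exact pow_le_of_le_one (by positivity) (Nat.cast_inv_le_one n) ha.ne'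
      · exact (abs_sum_le_sum_abs _ _).trans <| (ih hw n).trans <|
          pow_le_pow_left₀ (logGrowth_nonneg n) (logGrowth_mono (mem_range.1 hn).le) _
    calc ∑ n ∈ range N, |summand (a :: w) n|
        ≤ ∑ n ∈ range N, (n : ℝ)⁻¹ * logGrowth N ^ w.length := sum_le_sum term_le
      _ = (∑ n ∈ range N, (n : ℝ)⁻¹) * logGrowth N ^ w.length := (sum_mul ..).symm
      _ ≤ logGrowth N * logGrowth N ^ w.length :=
        mul_le_mul_of_nonneg_right (sum_range_inv_le_logGrowth N)
          (pow_nonneg (logGrowth_nonneg N) _)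
      _ = logGrowth N ^ (a :: w).length := (pow_succ' _ _).symm

lemma abs_nestedSum_le {w : List Letter} (hw : HasPosExponents w) (N : ℕ) :
    |nestedSum w N| ≤ logGrowth N ^ w.length :=
  (abs_sum_le_sum_abs _ _).trans (sum_abs_summand_le hw N)

lemma abs_summand_cons_le {w : List Letter} (hw : HasPosExponents w) (a : Letter) {n N : ℕ}
    (hn : n ≤ N) :
    |summand (a :: w) n| ≤ (n : ℝ)⁻¹ ^ a.exponent * logGrowth N ^ w.length := by
  rw [summand_cons, abs_mul, a.abs_value]
  gcongr
  exact (abs_nestedSum_le hw n).trans (pow_le_pow_left₀ (logGrowth_nonneg n) (logGrowth_mono hn) _)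

lemma summable_value {a : Letter} (ha : 2 ≤ a.exponent) : Summable a.value := by
  refine .of_norm ?_
  simp only [Real.norm_eq_abs, Letter.abs_value, inv_pow]
  exact Real.summable_nat_pow_inv.2 ha

lemma tendsto_nestedSum_singleton {a : Letter} (ha : 2 ≤ a.exponent) :
    Tendsto (nestedSum [a]) atTop (𝓝 (∑' n, a.value n)) := by
  refine (summable_value ha).hasSum.tendsto_sum_nat.congr fun N => sum_congr rfl fun n _ => ?_
  rcases eq_or_ne n 0 with rfl | hn
  · simp [Letter.value, show a.exponent ≠ 0 by lia]
  · rw [summand_cons, nestedSum_nil hn, mul_one]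

/-! ### Kernels -/

/-- The kernel `1 / C(n + k, k)` of the connected sums that transport multiple zeta values. -/
noncomputable def binomKernel (n k : ℕ) : ℝ := k.factorial * n.factorial / (n + k).factorial

/-- The kernel `1 / (C(n, k) C(n + k, k))` of Apéry's telescoping, for `k ≤ n`. -/
noncomputable def aperyKernel (n k : ℕ) : ℝ :=
  k.factorial ^ 2 * (n - k).factorial / (n + k).factorial

/-- The kernel `n / ((n - k) C(n, k) C(n + k, k))`, for `k < n`: both differences of
`aperyKernel` are rational multiples of it. -/
noncomputable def connectingKernel (n k : ℕ) : ℝ :=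
  n * k.factorial ^ 2 * (n - 1 - k).factorial / (n + k).factorial

lemma inv_centralBinom_eq (n : ℕ) :
    (n.centralBinom : ℝ)⁻¹ = n.factorial ^ 2 / (n + n).factorial := by
  rw [Nat.centralBinom, two_mul, Nat.cast_add_choose, inv_div, sq]

lemma binomKernel_self (n : ℕ) : binomKernel n n = (n.centralBinom : ℝ)⁻¹ := by
  rw [inv_centralBinom_eq, binomKernel, sq]

lemma binomKernel_succ_left (n k : ℕ) :
    binomKernel n k = (1 + k * ((n + 1 : ℕ) : ℝ)⁻¹) * binomKernel (n + 1) k := by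
  rw [binomKernel, binomKernel, Nat.add_right_comm, Nat.factorial_succ (n + k),
    Nat.factorial_succ n]
  have := Nat.factorial_ne_zero (n + k)
  push_cast
  field_simp
  ring

lemma binomKernel_comm (n k : ℕ) : binomKernel n k = binomKernel k n := by
  rw [binomKernel, binomKernel, mul_comm, add_comm]

lemma binomKernel_succ_self (k : ℕ) :
    binomKernel (k + 1) k = 2 * ((k + 1).centralBinom : ℝ)⁻¹ := by
  rw [binomKernel_comm, binomKernel_succ_left, binomKernel_self]
  field_simp
  ring

lemma aperyKernel_self (n : ℕ) : aperyKernel n n = (n.centralBinom : ℝ)⁻¹ := by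
  simp [inv_centralBinom_eq, aperyKernel]

lemma aperyKernel_eq {n k : ℕ} (hk : k < n) :
    aperyKernel n k = (1 - k * (n : ℝ)⁻¹) * connectingKernel n k := by
  obtain ⟨d, rfl⟩ := Nat.exists_eq_add_of_lt hk
  rw [aperyKernel, connectingKernel, show k + d + 1 - k = d + 1 by lia,
    show k + d + 1 - 1 - k = d by lia, Nat.factorial_succ]
  push_cast
  field_simp
  ring

lemma aperyKernel_pred {n k : ℕ} (hk : k < n) :
    aperyKernel (n - 1) k = (1 + k * (n : ℝ)⁻¹) * connectingKernel n k := by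
  obtain ⟨n, rfl⟩ := Nat.exists_eq_succ_of_ne_zero (Nat.ne_zero_of_lt hk)
  rw [aperyKernel, connectingKernel, Nat.succ_eq_add_one, Nat.add_sub_cancel, Nat.add_right_comm,
    Nat.factorial_succ (n + k)]
  push_cast
  field_simp
  ring

lemma connectingKernel_zero {n : ℕ} (hn : n ≠ 0) : connectingKernel n 0 = 1 := by
  obtain ⟨n, rfl⟩ := Nat.exists_eq_succ_of_ne_zero hn
  simp [connectingKernel, Nat.factorial_succ, Nat.cast_add_one_ne_zero, Nat.factorial_ne_zero]

lemma connectingKernel_succ_self (k : ℕ) :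
    connectingKernel (k + 1) k = 2 * ((k + 1).centralBinom : ℝ)⁻¹ := by
  rw [inv_centralBinom_eq, connectingKernel, ← add_assoc, Nat.factorial_succ (k + 1 + k),
    Nat.factorial_succ k]
  simp
  field_simp
  ring

lemma connectingKernel_pred {n k : ℕ} (hk : k + 1 < n) :
    connectingKernel n k =
      ((n : ℝ) ^ 2 * ((k + 1 : ℕ) : ℝ)⁻¹ ^ 2 - 1) * connectingKernel n (k + 1) := by
  obtain ⟨d, rfl⟩ := Nat.exists_eq_add_of_lt hk
  rw [connectingKernel, connectingKernel, show k + 1 + d + 1 - 1 - k = d + 1 by lia,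
    show k + 1 + d + 1 - 1 - (k + 1) = d by lia, Nat.factorial_succ d, Nat.factorial_succ k,
    ← add_assoc, Nat.factorial_succ (k + 1 + d + 1 + k)]
  push_cast
  field_simp
  ring

lemma binomKernel_antitone (n : ℕ) : Antitone (binomKernel n) := by
  refine antitone_nat_of_succ_le fun k => ?_
  rw [binomKernel_comm n k, binomKernel_succ_left k n, binomKernel_comm (k + 1) n]
  refine le_mul_of_one_le_left (by unfold binomKernel; positivity) ?_
  exact le_add_of_nonneg_right (by positivity)

lemma binomKernel_le (n : ℕ) {k : ℕ} (hk : k ≠ 0) : binomKernel n k ≤ ((n : ℝ) + 1)⁻¹ := by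
  refine (binomKernel_antitone n (Nat.one_le_iff_ne_zero.2 hk)).trans_eq ?_
  simp only [binomKernel, Nat.factorial_succ, Nat.factorial_zero]
  push_cast
  field_simp

lemma aperyKernel_le_binomKernel {n k : ℕ} (hk : k ≤ n) : aperyKernel n k ≤ binomKernel n k := by
  have : k.factorial * (n - k).factorial ≤ n.factorial :=
    Nat.le_of_dvd n.factorial_pos (Nat.factorial_mul_factorial_dvd_factorial hk)
  rw [aperyKernel, binomKernel, sq, mul_assoc]
  gcongr
  exact_mod_cast this

/-! ### Connected sums -/

/-- The nested sum of a word, with the central binomial coefficient of the largest index inserted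
in the denominator. -/
noncomputable def centralSum (w : List Letter) (N : ℕ) : ℝ :=
  ∑ n ∈ range N, summand w n * (n.centralBinom : ℝ)⁻¹

/-- The connected sum of Seki and Yamamoto: two nested sums whose largest indices `n > k` are
coupled by the kernel `κ`. -/
noncomputable def connectedSum (κ : ℕ → ℕ → ℝ) (u w : List Letter) (N : ℕ) : ℝ :=
  ∑ n ∈ range N, ∑ k ∈ range n, κ n k * (summand u n * summand w k)

/-- The boundary term left over by summation by parts in the larger index of a connected sum. -/
noncomputable def boundaryTerm (κ : ℕ → ℕ → ℝ) (v w : List Letter) (N : ℕ) : ℝ :=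
  ∑ k ∈ range N, κ (N - 1) k * (nestedSum v N * summand w k)

/-- The words of `d(n) S_v(n + 1) S_w(n)`, where `S` denotes nested sums: the largest index of `v`
may collide with `n`. -/
def starStuffle (d : Letter) (v w : List Letter) : List (List Letter) :=
  (stuffle v w).map (d :: ·) ++
    match v with
    | [] => []
    | x :: v => (stuffle v w).map ((d + x) :: ·)

lemma sum_centralSum_stuffle (d : Letter) (u w : List Letter) (N : ℕ) :
    (((stuffle u w).map (d :: ·)).map (centralSum · N)).sum =
      ∑ n ∈ range N, d.value n * (nestedSum u n * nestedSum w n) * (n.centralBinom : ℝ)⁻¹ := by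
  simp only [nestedSum_mul, centralSum, List.map_map, Function.comp_def, summand_cons]
  induction stuffle u w with
  | nil => simp
  | cons k L ih => simp [ih, mul_add, add_mul, sum_add_distrib]

lemma sum_centralSum_starStuffle (d : Letter) (v w : List Letter) (N : ℕ) :
    ((starStuffle d v w).map (centralSum · N)).sum =
      ∑ n ∈ range N,
        d.value n * (nestedSum v (n + 1) * nestedSum w n) * (n.centralBinom : ℝ)⁻¹ := by
  rw [starStuffle.eq_def, List.map_append, List.sum_append, sum_centralSum_stuffle]
  cases v with
  | nil =>
    simp only [List.map_nil, List.sum_nil, add_zero]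
    refine sum_congr rfl fun n _ => ?_
    rcases eq_or_ne n 0 with rfl | hn
    · simp
    · simp [nestedSum_nil hn, nestedSum_nil n.succ_ne_zero]
  | cons x v =>
    dsimp only
    rw [sum_centralSum_stuffle, ← sum_add_distrib]
    refine sum_congr rfl fun n _ => ?_
    rw [nestedSum_succ, summand_cons, Letter.value_add]
    ring

lemma connectedSum_nil (κ : ℕ → ℕ → ℝ) (w : List Letter) (N : ℕ) : connectedSum κ [] w N = 0 := by
  refine sum_eq_zero fun n _ => ?_
  rcases eq_or_ne n 0 with rfl | hn <;> simp [summand, *]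

lemma connectedSum_binomKernel_nil {u : List Letter} (hu : u ≠ []) (N : ℕ) :
    connectedSum binomKernel u [] N = nestedSum u N := by
  obtain ⟨a, u, rfl⟩ := List.exists_cons_of_ne_nil hu
  refine sum_congr rfl fun n _ => ?_
  rcases eq_or_ne n 0 with rfl | hn
  · simp
  · have kernel_zero : binomKernel n 0 = 1 := by simp [binomKernel, n.factorial_ne_zero]
    simp [summand, hn, Nat.pos_iff_ne_zero, kernel_zero]

lemma connectedSum_connectingKernel_nil (a : Letter) (u : List Letter) (N : ℕ) :
    connectedSum connectingKernel (a :: u) [] N = nestedSum (a :: u) N := by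
  refine sum_congr rfl fun n _ => ?_
  rcases eq_or_ne n 0 with rfl | hn
  · simp
  · simp [summand, hn, Nat.pos_iff_ne_zero, connectingKernel_zero hn]

lemma sum_mul_summand (f : ℕ → ℝ) (w : List Letter) (n : ℕ) :
    ∑ k ∈ range n, f k * summand w k =
      f (n - 1) * nestedSum w n - ∑ k ∈ range n, (f k - f (k - 1)) * nestedSum w k := by
  induction n with
  | zero => simp
  | succ n ih =>
    rw [sum_range_succ, sum_range_succ, ih, nestedSum_succ, Nat.add_sub_cancel]
    ring

lemma Letter.value_add_ofNat_mul (a : Letter) (s : ℕ) {n : ℕ} (hn : n ≠ 0) :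
    (a + OfNat.ofNat s).value n * (n : ℝ) ^ s = a.value n := by
  have : (n : ℝ) ^ s ≠ 0 := by positivity
  rw [value_add, value_ofNat, inv_pow, mul_assoc, inv_mul_cancel₀ this, mul_one]

lemma summand_add_ofNat_cons_mul (a : Letter) (s : ℕ) (w : List Letter) (n : ℕ) :
    summand ((a + OfNat.ofNat s) :: w) n * (n : ℝ) ^ s = summand (a :: w) n := by
  rcases eq_or_ne n 0 with rfl | hn
  · simp
  · rw [summand_cons, mul_right_comm, a.value_add_ofNat_mul s hn, summand_cons]

/-! ### Summation by parts in the smaller index -/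

lemma sum_binomKernel_mul_summand (w : List Letter) {n : ℕ} (hn : n ≠ 0) :
    ∑ k ∈ range n, binomKernel n k * summand w k =
      n * ∑ k ∈ range n, binomKernel n k * summand (1 :: w) k +
        2 * (nestedSum w n * (n.centralBinom : ℝ)⁻¹) := by
  have difference (k : ℕ) :
      (binomKernel n k - binomKernel n (k - 1)) * nestedSum w k =
        -(n * (binomKernel n k * summand (1 :: w) k)) := by
    cases k with
    | zero => simp
    | succ k =>
      rw [Nat.add_sub_cancel, binomKernel_comm n k, binomKernel_succ_left k n,
        binomKernel_comm (k + 1) n, summand_cons, Letter.value_ofNat]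
      ring
  obtain ⟨n, rfl⟩ := Nat.exists_eq_succ_of_ne_zero hn
  rw [sum_mul_summand, sum_congr rfl fun k _ => difference k, sum_neg_distrib, ← mul_sum,
    Nat.succ_eq_add_one, Nat.add_sub_cancel, binomKernel_succ_self]
  ring

lemma connectedSum_binomKernel_add_one (a : Letter) (u w : List Letter) (N : ℕ) :
    connectedSum binomKernel ((a + 1) :: u) w N =
      connectedSum binomKernel (a :: u) (1 :: w) N +
        2 * (((stuffle u w).map ((a + 1) :: ·)).map (centralSum · N)).sum := by
  rw [sum_centralSum_stuffle, mul_sum, connectedSum, connectedSum, ← sum_add_distrib]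
  refine sum_congr rfl fun n _ => ?_
  rcases eq_or_ne n 0 with rfl | hn
  · simp
  · simp only [mul_left_comm (binomKernel n _), ← mul_sum, sum_binomKernel_mul_summand w hn,
      ← summand_add_ofNat_cons_mul a 1 u]
    rw [summand_cons]
    ring

lemma sum_connectingKernel_mul_summand (w : List Letter) {n : ℕ} (hn : n ≠ 0) :
    ∑ k ∈ range n, connectingKernel n k * summand (w.modifyHead (-·)) k =
      -(n ^ 2 * ∑ k ∈ range n, connectingKernel n k * summand (-2 :: w) k) -
        2 * ((-1) ^ n * (nestedSum w n * (n.centralBinom : ℝ)⁻¹)) := by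
  have difference (k : ℕ) (hk : k ∈ range n) :
      ((-1) ^ k * connectingKernel n k - (-1) ^ (k - 1) * connectingKernel n (k - 1)) *
        nestedSum w k = n ^ 2 * (connectingKernel n k * summand (-2 :: w) k) := by
    cases k with
    | zero => simp
    | succ k =>
      rw [Nat.add_sub_cancel, connectingKernel_pred (mem_range.1 hk), summand_cons,
        Letter.value_neg, Letter.value_ofNat, pow_succ]
      ring
  have absorb_sign (k : ℕ) : connectingKernel n k * summand (w.modifyHead (-·)) k =
      (-1) ^ k * connectingKernel n k * summand w k := by
    rw [summand_modifyHead_neg]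
    ring
  rw [sum_congr rfl fun k _ => absorb_sign k, sum_mul_summand, sum_congr rfl difference, ← mul_sum]
  obtain ⟨n, rfl⟩ := Nat.exists_eq_succ_of_ne_zero hn
  rw [Nat.succ_eq_add_one, Nat.add_sub_cancel, connectingKernel_succ_self]
  ring

lemma connectedSum_connectingKernel_add_two (a : Letter) (u w : List Letter) (N : ℕ) :
    connectedSum connectingKernel ((a + 2) :: u) (w.modifyHead (-·)) N +
      connectedSum connectingKernel (a :: u) (-2 :: w) N +
        2 * (((stuffle u w).map (-(a + 2) :: ·)).map (centralSum · N)).sum = 0 := by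
  rw [sum_centralSum_stuffle, mul_sum, connectedSum, connectedSum, ← sum_add_distrib,
    ← sum_add_distrib]
  refine sum_eq_zero fun n _ => ?_
  rcases eq_or_ne n 0 with rfl | hn
  · simp
  · simp only [mul_left_comm (connectingKernel n _), ← mul_sum,
      sum_connectingKernel_mul_summand w hn, ← summand_add_ofNat_cons_mul a 2 u, Letter.value_neg]
    rw [summand_cons]
    ring

/-! ### Summation by parts in the larger index -/

lemma boundaryTerm_eq (κ : ℕ → ℕ → ℝ) (v w : List Letter) (N : ℕ) :
    boundaryTerm κ v w N =
      ∑ n ∈ range N, ∑ k ∈ range n,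
        (κ n k * nestedSum v (n + 1) - κ (n - 1) k * nestedSum v n) * summand w k +
      ∑ k ∈ range N, κ k k * (nestedSum v (k + 1) * summand w k) := by
  induction N with
  | zero => simp [boundaryTerm]
  | succ N ih =>
    rw [sum_range_succ, sum_range_succ _ N, add_add_add_comm, ← ih]
    simp only [boundaryTerm, sum_range_succ _ N, Nat.add_sub_cancel, ← add_assoc,
      ← sum_add_distrib]
    congr 1
    refine sum_congr rfl fun k _ => ?_
    ring

lemma connectedSum_binomKernel_one (v : List Letter) (b : Letter) (w : List Letter) (N : ℕ) :
    connectedSum binomKernel v ((b + 1) :: w) N +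
      ((starStuffle (b + 1) v w).map (centralSum · N)).sum =
        connectedSum binomKernel (1 :: v) (b :: w) N +
          boundaryTerm binomKernel v ((b + 1) :: w) N := by
  have difference (n k : ℕ) (hk : k ∈ range n) :
      (binomKernel n k * nestedSum v (n + 1) - binomKernel (n - 1) k * nestedSum v n) *
        summand ((b + 1) :: w) k =
      binomKernel n k * (summand v n * summand ((b + 1) :: w) k) -
        binomKernel n k * (summand (1 :: v) n * summand (b :: w) k) := by
    obtain ⟨n, rfl⟩ := Nat.exists_eq_succ_of_ne_zero (Nat.ne_zero_of_lt (mem_range.1 hk))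
    rw [Nat.succ_eq_add_one, Nat.add_sub_cancel, nestedSum_succ v (n + 1),
      binomKernel_succ_left n k, summand_cons 1 v, Letter.value_ofNat,
      ← summand_add_ofNat_cons_mul b 1 w]
    ring
  have diagonal (k : ℕ) : binomKernel k k * (nestedSum v (k + 1) * summand ((b + 1) :: w) k) =
      (b + 1).value k * (nestedSum v (k + 1) * nestedSum w k) * (k.centralBinom : ℝ)⁻¹ := by
    rw [binomKernel_self, summand_cons]
    ring
  rw [boundaryTerm_eq, sum_congr rfl fun n _ => sum_congr rfl (difference n),
    sum_congr rfl fun k _ => diagonal k, ← sum_centralSum_starStuffle]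
  simp only [sum_sub_distrib, connectedSum]
  ring

/-- The pure sign `n ↦ ε ^ n`. -/
def signLetter (alternating : Bool) : Letter := ⟨0, alternating⟩

/-- The sign `ε` of `signLetter`. -/
def signValue (alternating : Bool) : ℤ := bif alternating then -1 else 1

lemma value_signLetter_succ (ε : Bool) (n : ℕ) :
    (signLetter ε).value (n + 1) = signValue ε * (signLetter ε).value n := by
  cases ε <;> simp [Letter.value, signLetter, signValue, pow_succ]

lemma connectedSum_connectingKernel_sign (ε : Bool) (v : List Letter) (b : Letter)
    (w : List Letter) (N : ℕ) :
    (1 - signValue ε) * connectedSum connectingKernel (signLetter ε :: v) ((b + 1) :: w) N -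
      (1 + signValue ε) * connectedSum connectingKernel ((signLetter ε + 1) :: v) (b :: w) N +
      connectedSum connectingKernel (v.modifyHead (· + signLetter ε)) ((b + 1) :: w) N -
      connectedSum connectingKernel (v.modifyHead (· + (signLetter ε + 1))) (b :: w) N +
      ((starStuffle (b + 1 + signLetter ε) v w).map (centralSum · N)).sum =
    boundaryTerm (fun n k => (signLetter ε).value n * aperyKernel n k) v ((b + 1) :: w) N := by
  have difference (n k : ℕ) (hk : k ∈ range n) :
      ((signLetter ε).value n * aperyKernel n k * nestedSum v (n + 1) -
        (signLetter ε).value (n - 1) * aperyKernel (n - 1) k * nestedSum v n) *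
          summand ((b + 1) :: w) k =
      (1 - signValue ε) * (connectingKernel n k *
          (summand (signLetter ε :: v) n * summand ((b + 1) :: w) k)) -
        (1 + signValue ε) * (connectingKernel n k *
          (summand ((signLetter ε + 1) :: v) n * summand (b :: w) k)) +
        connectingKernel n k *
          (summand (v.modifyHead (· + signLetter ε)) n * summand ((b + 1) :: w) k) -
        connectingKernel n k *
          (summand (v.modifyHead (· + (signLetter ε + 1))) n * summand (b :: w) k) := by
    have hn : n ≠ 0 := Nat.ne_zero_of_lt (mem_range.1 hk)
    have sign_pred : (signLetter ε).value (n - 1) = signValue ε * (signLetter ε).value n := by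
      obtain ⟨n, rfl⟩ := Nat.exists_eq_succ_of_ne_zero hn
      rw [Nat.succ_eq_add_one, value_signLetter_succ, Nat.add_sub_cancel]
      cases ε <;> simp [signValue]
    rw [sign_pred, aperyKernel_eq (mem_range.1 hk), aperyKernel_pred (mem_range.1 hk),
      nestedSum_succ, summand_modifyHead_add _ v hn, summand_modifyHead_add _ v hn,
      summand_cons _ v, summand_cons _ v, Letter.value_add, Letter.value_ofNat,
      ← summand_add_ofNat_cons_mul b 1 w]
    ring
  have diagonal (k : ℕ) :
      (signLetter ε).value k * aperyKernel k k *
        (nestedSum v (k + 1) * summand ((b + 1) :: w) k) =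
      (b + 1 + signLetter ε).value k * (nestedSum v (k + 1) * nestedSum w k) *
        (k.centralBinom : ℝ)⁻¹ := by
    rw [aperyKernel_self, summand_cons, Letter.value_add _ (signLetter ε)]
    ring
  rw [boundaryTerm_eq, sum_congr rfl fun n _ => sum_congr rfl (difference n),
    sum_congr rfl fun k _ => diagonal k, ← sum_centralSum_starStuffle]
  simp only [sum_sub_distrib, sum_add_distrib, ← mul_sum, connectedSum]

lemma tendsto_boundaryTerm {κ : ℕ → ℕ → ℝ}
    (hκ : ∀ n k, k ≠ 0 → k ≤ n → |κ n k| ≤ ((n : ℝ) + 1)⁻¹) {v w : List Letter} {b : Letter}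
    (hv : HasPosExponents v) (hw : HasPosExponents (b :: w)) :
    Tendsto (boundaryTerm κ v (b :: w)) atTop (𝓝 0) := by
  refine squeeze_zero_norm (fun N => ?_) (tendsto_logGrowth_pow_div (v.length + (b :: w).length))
  have term_le (k : ℕ) (hk : k ∈ range N) :
      |κ (N - 1) k * (nestedSum v N * summand (b :: w) k)| ≤
        (N : ℝ)⁻¹ * (logGrowth N ^ v.length * |summand (b :: w) k|) := by
    rcases eq_or_ne k 0 with rfl | hk0
    · simp
    have hkN := mem_range.1 hk
    have kernel_le := hκ (N - 1) k hk0 (Nat.le_sub_one_of_lt hkN)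
    rw [Nat.cast_pred (by lia), sub_add_cancel] at kernel_le
    rw [abs_mul, abs_mul]
    gcongr
    exact abs_nestedSum_le hv N
  calc ‖boundaryTerm κ v (b :: w) N‖
      ≤ ∑ k ∈ range N, |κ (N - 1) k * (nestedSum v N * summand (b :: w) k)| :=
        abs_sum_le_sum_abs _ _
    _ ≤ ∑ k ∈ range N, (N : ℝ)⁻¹ * (logGrowth N ^ v.length * |summand (b :: w) k|) :=
        sum_le_sum term_le
    _ = (N : ℝ)⁻¹ * (logGrowth N ^ v.length * ∑ k ∈ range N, |summand (b :: w) k|) := by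
        simp only [← mul_sum]
    _ ≤ (N : ℝ)⁻¹ * (logGrowth N ^ v.length * logGrowth N ^ (b :: w).length) := by
        gcongr
        · exact pow_nonneg (logGrowth_nonneg N) _
        · exact sum_abs_summand_le hw N
    _ = logGrowth N ^ (v.length + (b :: w).length) / N := by
        rw [pow_add, div_eq_inv_mul]

lemma tendsto_boundaryTerm_binomKernel {v w : List Letter} {b : Letter}
    (hv : HasPosExponents v) (hw : HasPosExponents (b :: w)) :
    Tendsto (boundaryTerm binomKernel v (b :: w)) atTop (𝓝 0) := by
  refine tendsto_boundaryTerm (fun n k hk _ => ?_) hv hw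
  rw [abs_of_nonneg (by unfold binomKernel; positivity)]
  exact binomKernel_le n hk

/-! ### Shuffle products -/

/-- The shuffle product of two words: the quasi-shuffle product without collisions. -/
abbrev shuffle {α : Type*} : List α → List α → List (List α) :=
  quasiShuffle fun _ _ => []

lemma perm_append_of_mem_shuffle {α : Type*} {u v k : List α} (hk : k ∈ shuffle u v) :
    k.Perm (u ++ v) := by
  induction u generalizing v k with
  | nil => simp_all [shuffle]
  | cons a u ihu =>
    induction v generalizing k with
    | nil => simp_all [shuffle]
    | cons b v ihv =>
      simp only [shuffle, quasiShuffle_cons_cons, List.flatMap_nil, List.append_nil,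
        List.mem_append, List.mem_map] at hk
      rcases hk with ⟨k, hk, rfl⟩ | ⟨k, hk, rfl⟩
      · exact (ihu hk).cons a
      · exact ((ihv hk).cons b).trans List.perm_middle.symm

/-- The word of the nested sums that arises by expanding at `0` an iterated integral of the forms
`dt / t`, `dt / (1 - t)` and `-dt / (1 + t)`. A form is encoded by the location of its pole. -/
def toNested : List SignType → List Letter
  | [] => []
  | .zero :: l => (toNested l).modifyHead (· + 1)
  | .pos :: l => 1 :: toNested l
  | .neg :: l => -1 :: (toNested l).modifyHead (-·)

lemma hasPosExponents_toNested (l : List SignType) : HasPosExponents (toNested l) := by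
  induction l with
  | nil => simp [toNested, HasPosExponents]
  | cons c l ih =>
    cases c <;> cases h : toNested l <;> simp_all [toNested, HasPosExponents]

lemma exists_toNested_eq_cons {l : List SignType} (hl : ∃ c ∈ l, c ≠ 0) :
    ∃ a w, toNested l = a :: w := by
  induction l with
  | nil => simp at hl
  | cons c l ih =>
    cases c with
    | zero =>
      obtain ⟨a, w, h⟩ := ih (by simpa using hl)
      exact ⟨a + 1, w, by simp [toNested, h]⟩
    | pos => exact ⟨_, _, rfl⟩
    | neg => exact ⟨_, _, rfl⟩

/-- The condition that the innermost form of an iterated integral be integrable at `0`. -/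
def EndsAtPole (l : List SignType) : Prop := l.getLast? ≠ some 0

instance (l : List SignType) : Decidable (EndsAtPole l) :=
  inferInstanceAs (Decidable (_ ≠ _))

lemma EndsAtPole.tail {c : SignType} {l : List SignType} (h : EndsAtPole (c :: l)) :
    EndsAtPole l := by
  cases l <;> simp_all [EndsAtPole]

lemma EndsAtPole.tail_ne_nil {l : List SignType} (h : EndsAtPole (0 :: l)) : l ≠ [] := by
  rintro rfl
  simp [EndsAtPole] at h

lemma EndsAtPole.exists_ne_zero {l : List SignType} (h : EndsAtPole l) (hl : l ≠ []) :
    ∃ c ∈ l, c ≠ 0 :=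
  ⟨l.getLast hl, List.getLast_mem hl, by
    simpa [EndsAtPole, List.getLast?_eq_getLast_of_ne_nil hl] using h⟩

/-- The expansion at `0` of the iterated integral with forms `l`. -/
noncomputable def iteratedIntegral (l : List SignType) : PowerSeries ℝ :=
  PowerSeries.mk (summand (toNested l))

/-- The expansion at `0` of the form with pole `c`, divided by `dt / t`. -/
noncomputable def poleSeries (c : SignType) : PowerSeries ℝ :=
  if c = 0 then 1 else PowerSeries.mk fun n => if n = 0 then 0 else (c : ℝ) ^ n

lemma coeff_poleSeries_mul {c : SignType} (hc : c ≠ 0) (f : PowerSeries ℝ) (n : ℕ) :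
    PowerSeries.coeff n (poleSeries c * f) =
      (c : ℝ) ^ n * ∑ m ∈ range n, (c : ℝ) ^ m * PowerSeries.coeff m f := by
  rw [mul_comm, PowerSeries.coeff_mul, Nat.sum_antidiagonal_eq_sum_range_succ fun i j =>
    PowerSeries.coeff i f * PowerSeries.coeff j (poleSeries c), sum_range_succ, mul_sum]
  simp only [poleSeries, hc, if_false, PowerSeries.coeff_mk, Nat.sub_self, if_true, mul_zero,
    add_zero]
  refine sum_congr rfl fun m hm => ?_
  have hmn := mem_range.1 hm
  have sign_sq : (c : ℝ) ^ m * (c : ℝ) ^ m = 1 := by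
    cases c <;> simp_all [← mul_pow]
  rw [if_neg (by lia), ← Nat.sub_add_cancel hmn.le, pow_add, Nat.sub_add_cancel hmn.le]
  linear_combination (-(c : ℝ) ^ (n - m) * PowerSeries.coeff m f) * sign_sq

lemma natCast_mul_summand_toNested_cons (c : SignType) (l : List SignType) {n : ℕ} (hn : n ≠ 0) :
    n * summand (toNested (c :: l)) n =
      PowerSeries.coeff n (poleSeries c * iteratedIntegral l) := by
  have hn' : (n : ℝ) ≠ 0 := by exact_mod_cast hn
  cases c with
  | zero =>
    simp [toNested, poleSeries, iteratedIntegral, summand_modifyHead_add _ _ hn, hn']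
  | pos => simp [coeff_poleSeries_mul, toNested, iteratedIntegral, summand, hn']
  | neg =>
    simp [coeff_poleSeries_mul, toNested, iteratedIntegral, summand, summand_modifyHead_neg]
    field_simp

/-- The derivation `X d/dX` of power series. -/
noncomputable def eulerDerivation : Derivation ℝ (PowerSeries ℝ) (PowerSeries ℝ) :=
  (PowerSeries.X : PowerSeries ℝ) • PowerSeries.derivative ℝ

lemma coeff_eulerDerivation (f : PowerSeries ℝ) (n : ℕ) :
    PowerSeries.coeff n (eulerDerivation f) = n * PowerSeries.coeff n f := by
  cases n with
  | zero => simp [eulerDerivation]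
  | succ n =>
    simp [eulerDerivation, PowerSeries.coeff_succ_X_mul, PowerSeries.coeff_derivative, mul_comm]

lemma coeff_zero_iteratedIntegral {l : List SignType} (hl : ∃ c ∈ l, c ≠ 0) :
    PowerSeries.coeff 0 (iteratedIntegral l) = 0 := by
  obtain ⟨a, w, h⟩ := exists_toNested_eq_cons hl
  simp [iteratedIntegral, h]

lemma coeff_eulerDerivation_iteratedIntegral_cons (c : SignType) (l : List SignType) {n : ℕ}
    (hn : n ≠ 0) :
    PowerSeries.coeff n (eulerDerivation (iteratedIntegral (c :: l))) =
      PowerSeries.coeff n (poleSeries c * iteratedIntegral l) := by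
  rw [coeff_eulerDerivation, ← natCast_mul_summand_toNested_cons c l hn, iteratedIntegral,
    PowerSeries.coeff_mk]

lemma eulerDerivation_iteratedIntegral_cons {c : SignType} {l : List SignType}
    (h : EndsAtPole (c :: l)) :
    eulerDerivation (iteratedIntegral (c :: l)) = poleSeries c * iteratedIntegral l := by
  ext n
  rcases eq_or_ne n 0 with rfl | hn
  · rcases eq_or_ne c 0 with rfl | hc
    · simp [coeff_eulerDerivation, poleSeries,
        coeff_zero_iteratedIntegral (h.tail.exists_ne_zero h.tail_ne_nil)]
    · simp [coeff_eulerDerivation, coeff_poleSeries_mul hc]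
  · exact coeff_eulerDerivation_iteratedIntegral_cons c l hn

lemma coeff_eulerDerivation_sum_iteratedIntegral_cons (c : SignType) (L : List (List SignType))
    {n : ℕ} (hn : n ≠ 0) :
    PowerSeries.coeff n (eulerDerivation ((L.map (c :: ·)).map iteratedIntegral).sum) =
      PowerSeries.coeff n (poleSeries c * (L.map iteratedIntegral).sum) := by
  induction L with
  | nil => simp
  | cons l L ih =>
    simp only [List.map_cons, List.sum_cons, map_add, mul_add, ih,
      coeff_eulerDerivation_iteratedIntegral_cons c l hn]

@[simp] lemma iteratedIntegral_nil : iteratedIntegral [] = 1 := by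
  ext n
  simp [iteratedIntegral, toNested, summand, PowerSeries.coeff_one]

lemma exists_ne_zero_of_mem_shuffle {u v k : List SignType} (hk : k ∈ shuffle u v)
    (hu : ∃ c ∈ u, c ≠ 0) : ∃ c ∈ k, c ≠ 0 :=
  let ⟨c, hc, hc0⟩ := hu
  ⟨c, (perm_append_of_mem_shuffle hk).mem_iff.2 (List.mem_append_left v hc), hc0⟩

lemma iteratedIntegral_mul {u v : List SignType} (hu : EndsAtPole u) (hv : EndsAtPole v) :
    iteratedIntegral u * iteratedIntegral v = ((shuffle u v).map iteratedIntegral).sum := by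
  induction u generalizing v with
  | nil => simp
  | cons a u ihu =>
    induction v with
    | nil => simp
    | cons b v ihv =>
      ext n
      rcases eq_or_ne n 0 with rfl | hn
      · have hu0 := hu.exists_ne_zero (List.cons_ne_nil a u)
        rw [map_list_sum, List.map_map, List.sum_eq_zero, PowerSeries.coeff_mul,
          Nat.antidiagonal_zero, sum_singleton, coeff_zero_iteratedIntegral hu0, zero_mul]
        rintro x hx
        obtain ⟨k, hk, rfl⟩ := List.mem_map.1 hx
        exact coeff_zero_iteratedIntegral (exists_ne_zero_of_mem_shuffle hk hu0)
      · refine mul_left_cancel₀ (Nat.cast_ne_zero.2 hn : (n : ℝ) ≠ 0) ?_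
        rw [← coeff_eulerDerivation, ← coeff_eulerDerivation, Derivation.leibniz, smul_eq_mul,
          smul_eq_mul, eulerDerivation_iteratedIntegral_cons hu,
          eulerDerivation_iteratedIntegral_cons hv]
        simp only [shuffle, quasiShuffle_cons_cons, List.flatMap_nil, List.append_nil,
          List.map_append, List.sum_append, map_add,
          coeff_eulerDerivation_sum_iteratedIntegral_cons _ _ hn]
        rw [← ihu hu.tail hv, ← ihv hv.tail, ← map_add, ← map_add]
        congr 1
        ring

/-! ### Double shuffle relations -/

lemma sum_mul_sum_sub_convolution (f g : ℕ → ℝ) (N : ℕ) :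
    (∑ i ∈ range N, f i) * ∑ j ∈ range N, g j -
        ∑ n ∈ range N, ∑ q ∈ antidiagonal n, f q.1 * g q.2 =
      ∑ i ∈ range N, f i * ∑ j ∈ Ico (N - i) N, g j := by
  simp only [Nat.sum_antidiagonal_eq_sum_range_succ fun i j => f i * g j,
    sum_range_diag_flip N fun i j => f i * g j, sum_mul, ← mul_sum, ← sum_sub_distrib, ← mul_sub,
    sum_Ico_eq_sub _ (N.sub_le _)]

lemma inv_mul_inv_le {i j N : ℕ} (hi : i ≠ 0) (hj : j ≠ 0) (hN : N ≠ 0) (hNij : N ≤ i + j) :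
    (i : ℝ)⁻¹ * (j : ℝ)⁻¹ ≤ (N : ℝ)⁻¹ * ((i : ℝ)⁻¹ + (j : ℝ)⁻¹) := by
  have hi' : (i : ℝ) ≠ 0 := by exact_mod_cast hi
  have hj' : (j : ℝ) ≠ 0 := by exact_mod_cast hj
  rw [inv_add_inv hi' hj', div_eq_mul_inv, mul_inv, ← mul_assoc]
  refine le_mul_of_one_le_left (by positivity) ?_
  rw [← div_eq_inv_mul, one_le_div (by positivity)]
  exact_mod_cast hNij

lemma sum_Ico_inv_mul_inv_le {j N : ℕ} (hj : j < N) :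
    ∑ i ∈ Ico (N - j) N, (i : ℝ)⁻¹ * (j : ℝ)⁻¹ ≤ 2 * logGrowth N / N := by
  rcases eq_or_ne j 0 with rfl | hj0
  · simpa using div_nonneg (mul_nonneg zero_le_two (logGrowth_nonneg N)) N.cast_nonneg
  calc ∑ i ∈ Ico (N - j) N, (i : ℝ)⁻¹ * (j : ℝ)⁻¹
      ≤ ∑ i ∈ Ico (N - j) N, (N : ℝ)⁻¹ * ((i : ℝ)⁻¹ + (j : ℝ)⁻¹) :=
        sum_le_sum fun i hi => by
          have := mem_Ico.1 hi
          exact inv_mul_inv_le (by lia) hj0 (by lia) (by lia)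
    _ = (N : ℝ)⁻¹ * (∑ i ∈ Ico (N - j) N, (i : ℝ)⁻¹ + 1) := by
        rw [← mul_sum, sum_add_distrib, sum_const, Nat.card_Ico, Nat.sub_sub_self hj.le,
          nsmul_eq_mul, mul_inv_cancel₀ (by exact_mod_cast hj0)]
    _ ≤ (N : ℝ)⁻¹ * (logGrowth N + logGrowth N) := by
        gcongr
        · exact (sum_le_sum_of_subset_of_nonneg (fun i hi => by simp at hi ⊢; lia)
            fun _ _ _ => by positivity).trans (sum_range_inv_le_logGrowth N)
        · exact one_le_logGrowth N
    _ = 2 * logGrowth N / N := by ring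

lemma abs_sum_mul_sum_Ico_le {f g : ℕ → ℝ} {N : ℕ} {X Y : ℝ}
    (hX : 0 ≤ X) (hY : 0 ≤ Y) (hf : ∀ j < N, |f j| ≤ (j : ℝ)⁻¹ ^ 2 * X)
    (hg : ∀ i < N, |g i| ≤ (i : ℝ)⁻¹ * Y) :
    |∑ j ∈ range N, f j * ∑ i ∈ Ico (N - j) N, g i| ≤ 2 * (logGrowth N ^ 2 * (X * Y) / N) := by
  have term_le (j : ℕ) (hj : j ∈ range N) :
      |f j * ∑ i ∈ Ico (N - j) N, g i| ≤ (j : ℝ)⁻¹ * (2 * logGrowth N / N * (X * Y)) :=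
    have hjN := mem_range.1 hj
    calc |f j * ∑ i ∈ Ico (N - j) N, g i|
        ≤ (j : ℝ)⁻¹ ^ 2 * X * ∑ i ∈ Ico (N - j) N, (i : ℝ)⁻¹ * Y := by
          rw [abs_mul]
          gcongr
          · exact hf j hjN
          · exact (abs_sum_le_sum_abs _ _).trans <| sum_le_sum fun i hi => hg i (mem_Ico.1 hi).2
      _ = (j : ℝ)⁻¹ * (∑ i ∈ Ico (N - j) N, (i : ℝ)⁻¹ * (j : ℝ)⁻¹) * (X * Y) := by
          rw [← sum_mul, ← sum_mul]
          ring
      _ ≤ (j : ℝ)⁻¹ * (2 * logGrowth N / N) * (X * Y) := by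
          gcongr
          exact sum_Ico_inv_mul_inv_le hjN
      _ = (j : ℝ)⁻¹ * (2 * logGrowth N / N * (X * Y)) := mul_assoc ..
  calc |∑ j ∈ range N, f j * ∑ i ∈ Ico (N - j) N, g i|
      ≤ ∑ j ∈ range N, (j : ℝ)⁻¹ * (2 * logGrowth N / N * (X * Y)) :=
        (abs_sum_le_sum_abs _ _).trans (sum_le_sum term_le)
    _ ≤ logGrowth N * (2 * logGrowth N / N * (X * Y)) := by
        rw [← sum_mul]
        have := logGrowth_nonneg N
        gcongr
        exact sum_range_inv_le_logGrowth N
    _ = 2 * (logGrowth N ^ 2 * (X * Y) / N) := by ring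

lemma sum_nestedSum_toNested_shuffle {u v : List SignType} (hu : EndsAtPole u) (hv : EndsAtPole v)
    (N : ℕ) :
    ((shuffle u v).map fun k => nestedSum (toNested k) N).sum =
      ∑ n ∈ range N, ∑ q ∈ antidiagonal n,
        summand (toNested u) q.1 * summand (toNested v) q.2 := by
  have coeff_product (n : ℕ) : PowerSeries.coeff n (iteratedIntegral u * iteratedIntegral v) =
      ∑ q ∈ antidiagonal n, summand (toNested u) q.1 * summand (toNested v) q.2 := by
    simp [PowerSeries.coeff_mul, iteratedIntegral]
  simp only [← coeff_product, iteratedIntegral_mul hu hv]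
  induction shuffle u v with
  | nil => simp
  | cons k L ih =>
    rw [List.map_cons, List.sum_cons, ih]
    simp [sum_add_distrib, nestedSum, iteratedIntegral]

lemma abs_summand_toNested_le {l : List SignType} (hl : EndsAtPole l) (hl0 : l ≠ []) {n N : ℕ}
    (hn : n ≤ N) :
    |summand (toNested l) n| ≤ (n : ℝ)⁻¹ * logGrowth N ^ (toNested l).length := by
  obtain ⟨a, w, h⟩ := exists_toNested_eq_cons (hl.exists_ne_zero hl0)
  obtain ⟨ha, hw⟩ := hasPosExponents_cons.1 (h ▸ hasPosExponents_toNested l)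
  rw [h, List.length_cons]
  refine (abs_summand_cons_le hw a hn).trans ?_
  have := one_le_logGrowth N
  gcongr
  · exact pow_le_of_le_one (by positivity) (Nat.cast_inv_le_one n) ha.ne'
  · simp

lemma abs_summand_toNested_zero_cons_le {l : List SignType} (hl : EndsAtPole (0 :: l))
    {n N : ℕ} (hn : n ≤ N) :
    |summand (toNested (0 :: l)) n| ≤ (n : ℝ)⁻¹ ^ 2 * logGrowth N ^ (toNested l).length := by
  rcases eq_or_ne n 0 with rfl | hn0
  · obtain ⟨a, w, h⟩ := exists_toNested_eq_cons (hl.tail.exists_ne_zero hl.tail_ne_nil)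
    have : toNested (0 :: l) = (a + 1) :: w := congrArg (List.modifyHead (· + 1)) h
    simp [this]
  · have : toNested (0 :: l) = (toNested l).modifyHead (· + 1) := rfl
    rw [this, summand_modifyHead_add _ _ hn0, Letter.value_one, abs_mul, sq, mul_assoc,
      abs_of_nonneg (by positivity)]
    gcongr
    exact abs_summand_toNested_le hl.tail hl.tail_ne_nil hn

lemma tendsto_mul_sub_sum_shuffle {u v : List SignType} (hu : EndsAtPole (0 :: u))
    (hv : EndsAtPole v) (hv0 : v ≠ []) :
    Tendsto (fun N => nestedSum (toNested (0 :: u)) N * nestedSum (toNested v) N -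
      ((shuffle (0 :: u) v).map fun k => nestedSum (toNested k) N).sum) atTop (𝓝 0) := by
  have bound := (tendsto_logGrowth_pow_div
    (2 + ((toNested u).length + (toNested v).length))).const_mul 2
  rw [mul_zero] at bound
  refine squeeze_zero_norm (fun N => ?_) bound
  rw [sum_nestedSum_toNested_shuffle hu hv, nestedSum, nestedSum, sum_mul_sum_sub_convolution,
    pow_add, pow_add]
  have := logGrowth_nonneg N
  exact abs_sum_mul_sum_Ico_le (by positivity) (by positivity)
    (fun j hj => abs_summand_toNested_zero_cons_le hu hj.le)
    (fun i hi => abs_summand_toNested_le hv hv0 hi.le)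

/-! ### Null relations -/

/-- The sums between which the relations are formed. -/
inductive Term
  | central (w : List Letter)
  | connected (u w : List Letter)
  | nested (w : List Letter)
  | product (u v : List Letter)
  deriving DecidableEq

namespace Term

/-- The value of a term, with all summation indices less than `N`. -/
noncomputable def eval (N : ℕ) : Term → ℝ
  | central w => centralSum w N
  | connected u w => connectedSum connectingKernel u w N
  | nested w => nestedSum w N
  | product u v => nestedSum u N * nestedSum v N

end Term

/-- A linear combination of terms, as a list of terms with their coefficients. -/
abbrev LinComb := List (ℤ × Term)

namespace LinComb

/-- The value of a linear combination, with all summation indices less than `N`. -/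
noncomputable def eval (N : ℕ) (C : LinComb) : ℝ := (C.map fun x => (x.1 : ℝ) * x.2.eval N).sum

@[simp] lemma eval_nil (N : ℕ) : eval N [] = 0 := rfl

@[simp] lemma eval_cons (N : ℕ) (x : ℤ × Term) (C : LinComb) :
    eval N (x :: C) = x.1 * x.2.eval N + eval N C := by
  simp [eval]

@[simp] lemma eval_append (N : ℕ) (C D : LinComb) : eval N (C ++ D) = eval N C + eval N D := by
  simp [eval]

/-- The sum of the terms `f w` for `w` in `L`, all with coefficient `c`. -/
def ofWords {α : Type*} (c : ℤ) (f : α → Term) (L : List α) : LinComb := L.map fun w => (c, f w)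

@[simp] lemma eval_ofWords {α : Type*} (N : ℕ) (c : ℤ) (f : α → Term) (L : List α) :
    eval N (ofWords c f L) = c * (L.map fun w => (f w).eval N).sum := by
  simp [eval, ofWords, Function.comp_def, List.sum_map_mul_left]

/-- The linear combination `C` multiplied by `c`. -/
def smul (c : ℤ) (C : LinComb) : LinComb := C.map fun x => (c * x.1, x.2)

@[simp] lemma eval_smul (N : ℕ) (c : ℤ) (C : LinComb) : eval N (smul c C) = c * eval N C := by
  simp [eval, smul, Function.comp_def, mul_assoc, List.sum_map_mul_left]

/-- The connected sum of `u` and `w` with coefficient `c`, which vanishes if `u` is empty and is a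
nested sum if only `w` is empty. -/
def connected (c : ℤ) : List Letter → List Letter → LinComb
  | [], _ => []
  | a :: u, [] => [(c, .nested (a :: u))]
  | a :: u, b :: w => [(c, .connected (a :: u) (b :: w))]

@[simp] lemma eval_connected (N : ℕ) (c : ℤ) (u w : List Letter) :
    eval N (connected c u w) = c * connectedSum connectingKernel u w N := by
  cases u with
  | nil => simp [connected, connectedSum_nil]
  | cons a u => cases w <;> simp [connected, Term.eval, connectedSum_connectingKernel_nil]

/-- The central sums split off when the connected sum of `toNested l` and `b :: w` with
`binomKernel` is transported to `0`, by moving the forms of `l` one by one into the second word.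
Forms with pole `-1` do not occur. -/
def transport : List SignType → Letter → List Letter → LinComb
  | [], _, _ => []
  | .zero :: l, b, w =>
    (match toNested l with
      | [] => []
      | a :: u => ofWords 2 .central ((stuffle u (b :: w)).map ((a + 1) :: ·))) ++
    transport l 1 (b :: w)
  | .pos :: l, b, w =>
    ofWords 1 .central (starStuffle (b + 1) (toNested l) w) ++ transport l (b + 1) w
  | .neg :: _, _, _ => []

end LinComb

lemma tendsto_connectedSum_sub_transport {l : List SignType} (hl : ∀ c ∈ l, c ≠ -1)
    (hend : EndsAtPole l) {b : Letter} {w : List Letter} (hw : HasPosExponents (b :: w)) :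
    Tendsto (fun N => connectedSum binomKernel (toNested l) (b :: w) N -
      (LinComb.transport l b w).eval N) atTop (𝓝 0) := by
  induction l generalizing b w with
  | nil => simp [toNested, connectedSum_nil, LinComb.transport]
  | cons c l ih =>
    have ih' := fun b w => @ih (fun c hc => hl c (List.mem_cons_of_mem _ hc)) hend.tail b w
    cases c with
    | zero =>
      obtain ⟨a, u, h⟩ := exists_toNested_eq_cons (hend.tail.exists_ne_zero hend.tail_ne_nil)
      refine (ih' 1 (b :: w) (hasPosExponents_cons.2 ⟨one_pos, hw⟩)).congr fun N => ?_
      have step := connectedSum_binomKernel_add_one a u (b :: w) N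
      simp only [toNested, h, List.modifyHead_cons, LinComb.transport, LinComb.eval_append,
        LinComb.eval_ofWords, Term.eval]
      push_cast
      linear_combination -step
    | pos =>
      have hv := hasPosExponents_toNested l
      have hb : HasPosExponents ((b + 1) :: w) := by simp_all [HasPosExponents]
      have limit := (ih' (b + 1) w hb).sub (tendsto_boundaryTerm_binomKernel hv hb)
      rw [sub_zero] at limit
      refine limit.congr fun N => ?_
      have step := connectedSum_binomKernel_one (toNested l) b w N
      simp only [toNested, LinComb.transport, LinComb.eval_append, LinComb.eval_ofWords, Term.eval]
      push_cast
      linear_combination step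
    | neg => simp at hl

/-- Relations between terms that hold in the limit: the transport of a nested sum through connected
sums with `binomKernel`, Apéry's telescoping in the smaller index (`apery`) and, with the sign `ε`,
in the larger index (`sign`) of a connected sum, stuffle products, and double shuffle relations,
the latter also multiplied by a nested sum of depth one. -/
inductive Relation
  | transport (l : List SignType)
  | apery (a : Letter) (u w : List Letter)
  | sign (ε : Bool) (v : List Letter) (b : Letter) (w : List Letter)
  | stuffle (u v : List Letter)
  | doubleShuffle (u v : List SignType)
  | mulDoubleShuffle (a : Letter) (u v : List SignType)

namespace Relation

open LinComb

/-- The conditions under which the terms of a relation are defined and its error tends to `0`. -/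
def Valid : Relation → Prop
  | transport l => EndsAtPole (0 :: l) ∧ ∀ c ∈ l, c ≠ -1
  | apery _ _ _ => True
  | sign _ v b w => HasPosExponents v ∧ HasPosExponents ((b + 1) :: w)
  | stuffle _ _ => True
  | doubleShuffle u v => EndsAtPole (0 :: u) ∧ EndsAtPole v ∧ v ≠ []
  | mulDoubleShuffle a u v => 2 ≤ a.exponent ∧ EndsAtPole (0 :: u) ∧ EndsAtPole v ∧ v ≠ []

instance (r : Relation) : Decidable r.Valid := by
  cases r <;> unfold Valid <;> infer_instance

/-- The linear combination that a relation asserts to tend to `0`. -/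
def expand : Relation → LinComb
  | transport l =>
    (1, .nested (toNested (0 :: l))) :: (-2, .central (toNested (0 :: l))) ::
      smul (-1) (LinComb.transport l 1 [])
  | apery a u w =>
    connected 1 ((a + 2) :: u) (w.modifyHead (-·)) ++ connected 1 (a :: u) (-2 :: w) ++
      ofWords 2 .central ((AperySum.stuffle u w).map (-(a + 2) :: ·))
  | sign ε v b w =>
    connected (1 - signValue ε) (signLetter ε :: v) ((b + 1) :: w) ++
      connected (-(1 + signValue ε)) ((signLetter ε + 1) :: v) (b :: w) ++
      connected 1 (v.modifyHead (· + signLetter ε)) ((b + 1) :: w) ++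
      connected (-1) (v.modifyHead (· + (signLetter ε + 1))) (b :: w) ++
      ofWords 1 .central (starStuffle (b + 1 + signLetter ε) v w)
  | stuffle u v => (-1, .product u v) :: ofWords 1 .nested (AperySum.stuffle u v)
  | doubleShuffle u v =>
    ofWords 1 .nested (AperySum.stuffle (toNested (0 :: u)) (toNested v)) ++
      ofWords (-1) (fun k => .nested (toNested k)) (shuffle (0 :: u) v)
  | mulDoubleShuffle a u v =>
    ofWords 1 (.product [a]) (AperySum.stuffle (toNested (0 :: u)) (toNested v)) ++
      ofWords (-1) (fun k => .product [a] (toNested k)) (shuffle (0 :: u) v)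

lemma tendsto_transport {l : List SignType} (h : (transport l).Valid) :
    Tendsto (fun N => (transport l).expand.eval N) atTop (𝓝 0) := by
  obtain ⟨hend, hl⟩ := h
  have hpos : HasPosExponents [1] := by decide
  obtain ⟨a, u, hu⟩ := exists_toNested_eq_cons (hend.tail.exists_ne_zero hend.tail_ne_nil)
  refine (tendsto_connectedSum_sub_transport hl hend.tail hpos).congr fun N => ?_
  have step := connectedSum_binomKernel_add_one a u [] N
  rw [connectedSum_binomKernel_nil (by simp)] at step
  simp only [expand, toNested, hu, List.modifyHead_cons, eval_cons, eval_smul, Term.eval]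
  simp only [quasiShuffle_nil_right, List.map_cons, List.map_nil, List.sum_cons,
    List.sum_nil] at step
  push_cast
  linear_combination -step

lemma tendsto_sign {ε : Bool} {v : List Letter} {b : Letter} {w : List Letter}
    (h : (sign ε v b w).Valid) : Tendsto (fun N => (sign ε v b w).expand.eval N) atTop (𝓝 0) := by
  have kernel_le (n k : ℕ) (hk : k ≠ 0) (hkn : k ≤ n) :
      |(signLetter ε).value n * aperyKernel n k| ≤ ((n : ℝ) + 1)⁻¹ := by
    have kernel_nonneg : 0 ≤ aperyKernel n k := by unfold aperyKernel; positivity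
    rw [abs_mul, Letter.abs_value, abs_of_nonneg kernel_nonneg, signLetter, pow_zero, one_mul]
    exact (aperyKernel_le_binomKernel hkn).trans (binomKernel_le n hk)
  refine (tendsto_boundaryTerm kernel_le h.1 h.2).congr fun N => ?_
  rw [← connectedSum_connectingKernel_sign]
  simp only [expand, eval_append, eval_connected, eval_ofWords, Term.eval]
  push_cast
  ring

lemma tendsto_doubleShuffle {u v : List SignType} (h : (doubleShuffle u v).Valid) :
    Tendsto (fun N => (doubleShuffle u v).expand.eval N) atTop (𝓝 0) := by
  refine (tendsto_mul_sub_sum_shuffle h.1 h.2.1 h.2.2).congr fun N => ?_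
  simp only [expand, eval_append, eval_ofWords, Term.eval, nestedSum_mul]
  push_cast
  ring

lemma tendsto_mulDoubleShuffle {a : Letter} {u v : List SignType}
    (h : (mulDoubleShuffle a u v).Valid) :
    Tendsto (fun N => (mulDoubleShuffle a u v).expand.eval N) atTop (𝓝 0) := by
  have limit := (tendsto_nestedSum_singleton h.1).mul (tendsto_doubleShuffle h.2)
  rw [mul_zero] at limit
  refine limit.congr fun N => ?_
  simp only [expand, eval_append, eval_ofWords, Term.eval, List.sum_map_mul_left]
  ring

lemma tendsto_expand {r : Relation} (h : r.Valid) :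
    Tendsto (fun N => r.expand.eval N) atTop (𝓝 0) := by
  cases r with
  | transport l => exact tendsto_transport h
  | apery a u w =>
    refine tendsto_const_nhds.congr fun N => ?_
    rw [← connectedSum_connectingKernel_add_two a u w N]
    simp [expand, Term.eval, Function.comp_def, add_assoc]
  | sign ε v b w => exact tendsto_sign h
  | stuffle u v =>
    refine tendsto_const_nhds.congr fun N => ?_
    simp [expand, Term.eval, nestedSum_mul]
  | doubleShuffle u v => exact tendsto_doubleShuffle h
  | mulDoubleShuffle a u v => exact tendsto_mulDoubleShuffle h

end Relation

/-! ### Cancelling linear combinations -/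

/-- A binary search tree recording the coefficients of a linear combination of elements of `α`,
ordered by a numerical key. -/
inductive CoeffTree (α : Type*)
  | leaf
  | node (left : CoeffTree α) (key : ℕ) (coeff : ℤ) (term : α) (right : CoeffTree α)

namespace CoeffTree

variable {α : Type*} (φ : α → ℝ)

/-- The value of the recorded linear combination when `x : α` stands for the number `φ x`. -/
def eval : CoeffTree α → ℝ
  | leaf => 0
  | node l _ c x r => l.eval + c * φ x + r.eval

/-- Whether all recorded coefficients vanish. -/
def isZero : CoeffTree α → Bool
  | leaf => true
  | node l _ c _ r => l.isZero && (c == 0) && r.isZero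

variable {φ} in
lemma eval_eq_zero {t : CoeffTree α} (h : t.isZero = true) : t.eval φ = 0 := by
  induction t with
  | leaf => rfl
  | node l k c x r ihl ihr =>
    simp only [isZero, Bool.and_eq_true, beq_iff_eq] at h
    simp [eval, ihl h.1.1, ihr h.2, h.1.2]

variable [DecidableEq α]

/-- Adds `c * x`, with key `k`, to the tree and passes the result on to the test `f`. In this
continuation-passing form the kernel evaluates every intermediate tree completely. -/
def add (k : ℕ) (c : ℤ) (x : α) : CoeffTree α → (CoeffTree α → Bool) → Bool
  | leaf, f => f (node leaf k c x leaf)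
  | node l k' c' x' r, f =>
    bif k.blt k' then add k c x l fun l => f (node l k' c' x' r)
    else bif k.beq k' && decide (x = x') then f (node l k' (c + c') x' r)
    else add k c x r fun r => f (node l k' c' x' r)

lemma exists_of_add {k : ℕ} {c : ℤ} {x : α} {t : CoeffTree α} {f : CoeffTree α → Bool}
    (h : t.add k c x f = true) : ∃ t', f t' = true ∧ t'.eval φ = c * φ x + t.eval φ := by
  induction t generalizing f with
  | leaf => exact ⟨_, h, by simp [eval]⟩
  | node l k' c' x' r ihl ihr =>
    rw [add] at h
    cases hk : k.blt k' with
    | true =>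
      obtain ⟨l', hf, hl'⟩ := ihl (by simpa [hk] using h)
      exact ⟨_, hf, by simp only [eval, hl']; ring⟩
    | false =>
      by_cases hx : (k.beq k' && decide (x = x')) = true
      · simp only [hk, hx, cond_false, cond_true] at h
        obtain ⟨-, rfl⟩ : k = k' ∧ x = x' := by simpa using hx
        refine ⟨_, h, ?_⟩
        simp only [eval]
        push_cast
        ring
      · obtain ⟨r', hf, hr'⟩ := ihr (by simpa only [hk, hx, cond_false] using h)
        exact ⟨_, hf, by simp only [eval, hr']; ring⟩

/-- Whether the linear combination `C` cancels against the one recorded in the tree. -/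
def cancels (key : α → ℕ) : List (ℤ × α) → CoeffTree α → Bool
  | [], t => t.isZero
  | (c, x) :: C, t => t.add (key x) c x (cancels key C)

lemma sum_add_eval_eq_zero {key : α → ℕ} {C : List (ℤ × α)} {t : CoeffTree α}
    (h : t.cancels key C = true) : (C.map fun y => (y.1 : ℝ) * φ y.2).sum + t.eval φ = 0 := by
  induction C generalizing t with
  | nil => simpa using eval_eq_zero h
  | cons y C ih =>
    obtain ⟨t', hC, ht'⟩ := exists_of_add φ h
    have := ih hC
    rw [ht'] at this
    rw [List.map_cons, List.sum_cons]
    linarith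

end CoeffTree

/-- A numerical code of a word, continuing from the code `s`. -/
def wordKey (s : ℕ) (w : List Letter) : ℕ :=
  w.foldl (fun s a => 37 * s + 2 * a.exponent + a.alternating.toNat) s

/-- A numerical code of a term, which orders the search trees. -/
def Term.key : Term → ℕ
  | .central w => wordKey 1 w
  | .connected u w => wordKey (37 * wordKey 2 u) w
  | .nested w => wordKey 3 w
  | .product u v => wordKey (37 * wordKey 4 u) v

lemma tendsto_eval_flatMap_expand {R : List (ℤ × Relation)} (hR : ∀ x ∈ R, x.2.Valid) :
    Tendsto (fun N => LinComb.eval N (R.flatMap fun x => LinComb.smul x.1 x.2.expand)) atTop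
      (𝓝 0) := by
  induction R with
  | nil => simp
  | cons x R ih =>
    have hx := Relation.tendsto_expand (hR x (by simp))
    have limit := (hx.const_mul (x.1 : ℝ)).add (ih fun y hy => hR y (List.mem_cons_of_mem _ hy))
    rw [mul_zero, add_zero] at limit
    exact limit.congr fun N => by simp

lemma tendsto_eval_of_cancels {C : LinComb} {R : List (ℤ × Relation)} (hR : ∀ x ∈ R, x.2.Valid)
    (h : CoeffTree.leaf.cancels Term.key
      (C ++ R.flatMap fun x => LinComb.smul x.1 x.2.expand) = true) :
    Tendsto (fun N => C.eval N) atTop (𝓝 0) := by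
  have limit := (tendsto_eval_flatMap_expand hR).neg
  rw [neg_zero] at limit
  refine limit.congr fun N => ?_
  have cancel := CoeffTree.sum_add_eval_eq_zero (Term.eval N) h
  change LinComb.eval N (C ++ _) + _ = 0 at cancel
  rw [LinComb.eval_append, CoeffTree.eval, add_zero] at cancel
  linarith

/-! ### Zeta values -/

lemma tsum_value_ofNat {s : ℕ} (hs : 2 ≤ s) :
    ∑' n, (OfNat.ofNat s : Letter).value n = zeta s := by
  rw [(summable_value (a := OfNat.ofNat s) hs).tsum_eq_zero_add, Letter.value_ofNat, Nat.cast_zero,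
    inv_zero, zero_pow (by lia), zero_add, zeta]
  simp [Letter.value_ofNat]

lemma tsum_value_neg_ofNat {s : ℕ} (hs : 2 ≤ s) :
    ∑' n, (-OfNat.ofNat s : Letter).value n = (2 / 2 ^ s - 1) * zeta s := by
  have summable_pos := summable_value (a := OfNat.ofNat s) hs
  have summable_neg := summable_value (a := -OfNat.ofNat s) hs
  have even_term (k : ℕ) : (-OfNat.ofNat s : Letter).value (2 * k) +
      (OfNat.ofNat s : Letter).value (2 * k) = 2 / 2 ^ s * (OfNat.ofNat s : Letter).value k := by
    simp [Letter.value_ofNat, mul_pow]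
    ring
  have odd_term (k : ℕ) : (-OfNat.ofNat s : Letter).value (2 * k + 1) +
      (OfNat.ofNat s : Letter).value (2 * k + 1) = 0 := by
    simp [pow_succ]
  have split := tsum_even_add_odd (f := fun n => (-OfNat.ofNat s : Letter).value n +
    (OfNat.ofNat s : Letter).value n) (by simpa only [even_term] using summable_pos.mul_left _)
    (by simpa only [odd_term] using summable_zero)
  simp only [even_term, odd_term, tsum_mul_left, tsum_zero, summable_neg.tsum_add summable_pos,
    tsum_value_ofNat hs] at split
  linarith

lemma zeta_two : zeta 2 = Real.pi ^ 2 / 6 := by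
  rw [← tsum_value_ofNat le_rfl, ← hasSum_zeta_two.tsum_eq]
  exact tsum_congr fun n => by rw [Letter.value_ofNat, inv_pow, one_div]

lemma zeta_four : zeta 4 = Real.pi ^ 4 / 90 := by
  rw [← tsum_value_ofNat (by lia), ← hasSum_zeta_four.tsum_eq]
  exact tsum_congr fun n => by rw [Letter.value_ofNat, inv_pow, one_div]

lemma nestedSum_neg_ofNat (s n : ℕ) : nestedSum [-OfNat.ofNat s] (n + 1) = A s n := by
  rw [nestedSum, sum_range_succ', summand_cons_zero, add_zero, A]
  refine sum_congr rfl fun j _ => ?_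
  rw [summand_cons, nestedSum_nil j.succ_ne_zero, Letter.value_neg, Letter.value_ofNat]
  push_cast
  ring

lemma sum_range_eq_centralSum (N : ℕ) :
    ∑ n ∈ range N, (-1 : ℝ) ^ (n + 1) / (((n : ℝ) + 1) ^ 3 * ((2 * (n + 1)).choose (n + 1) : ℝ)) *
        (110 * A 4 (n + 1) + 29 * (-1 : ℝ) ^ (n + 1) / ((n : ℝ) + 1) ^ 4) =
      110 * centralSum [-3, -4] (N + 1) + 139 * centralSum [7] (N + 1) := by
  simp only [centralSum, sum_range_succ', summand_cons_zero, zero_mul, add_zero, mul_sum,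
    ← sum_add_distrib]
  refine sum_congr rfl fun n _ => ?_
  have nestedSum_four : nestedSum [-4] (n + 1) = A 4 n := nestedSum_neg_ofNat 4 n
  have A_succ : A 4 (n + 1) = A 4 n + (-1) ^ (n + 1) / ((n : ℝ) + 1) ^ 4 := sum_range_succ _ _
  have sign_sq : (-1 : ℝ) ^ (n + 1) * (-1) ^ (n + 1) = 1 := by
    rw [← mul_pow, neg_one_mul, neg_neg, one_pow]
  rw [summand_cons, nestedSum_four, summand_cons, nestedSum_nil n.succ_ne_zero, Letter.value_neg,
    Letter.value_ofNat, Letter.value_ofNat, A_succ, Nat.centralBinom_eq_two_mul_choose]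
  push_cast
  generalize (n : ℝ) + 1 = m, ((2 * (n + 1)).choose (n + 1) : ℝ) = c
  linear_combination 139 * m⁻¹ ^ 7 * c⁻¹ * sign_sq

lemma tendsto_nestedSum_ofNat {s : ℕ} (hs : 2 ≤ s) :
    Tendsto (nestedSum [OfNat.ofNat s]) atTop (𝓝 (zeta s)) := by
  rw [← tsum_value_ofNat hs]
  exact tendsto_nestedSum_singleton hs

lemma tendsto_nestedSum_neg_ofNat {s : ℕ} (hs : 2 ≤ s) :
    Tendsto (nestedSum [-OfNat.ofNat s]) atTop (𝓝 ((2 / 2 ^ s - 1) * zeta s)) := by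
  rw [← tsum_value_neg_ofNat hs]
  exact tendsto_nestedSum_singleton hs

/-! ### The certificate -/

/-- The series of the theorem, multiplied by the common denominator `864`. -/
def scaledSeries : LinComb := [(95040, .central [-3, -4]), (120096, .central [7])]

/-- Zeta values and products of two, alternating or not, whose sum cancels `scaledSeries` in the
limit. -/
def zetaProducts : LinComb :=
  [(104040, .product [2] [5]), (135936, .product [-2] [-5]), (-64980, .product [3] [4]),
   (-9846, .product [3] [-4]), (-26496, .product [-3] [-4]), (24822, .product [-4] [3]),
   (248832, .product [5] [-2]), (-374877, .nested [7]), (-372672, .nested [-7])]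

/-- Multiples of relations that cancel `scaledSeries ++ zetaProducts` term by term. They were found
by linear algebra over `ℚ` on the relations of weight `7`. -/
def certificate : List (ℤ × Relation) :=
  [(26640, .transport [0, 0, 0, 0, 0, 1]), (-15408, .transport [0, 0, 0, 0, 1, 1]),
   (15552, .transport [0, 0, 0, 1, 0, 1]), (2304, .transport [0, 0, 1, 0, 0, 1]),
   (-2736, .transport [0, 1, 0, 0, 0, 1]), (-144, .transport [1, 0, 0, 0, 0, 1]),
   (5040, .transport [0, 0, 0, 1, 1, 1]), (-5184, .transport [0, 0, 1, 0, 1, 1]),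
   (-2304, .transport [0, 0, 1, 1, 0, 1]), (2592, .transport [0, 1, 0, 1, 0, 1]),
   (-6048, .transport [0, 1, 1, 0, 0, 1]), (-2736, .transport [1, 0, 0, 0, 1, 1]),
   (2592, .transport [1, 0, 0, 1, 0, 1]), (-2592, .transport [1, 0, 1, 0, 0, 1]),
   (4464, .transport [1, 1, 0, 0, 0, 1]), (576, .apery (-0) [] [1, 2, 1, 1]),
   (2880, .apery (-0) [] [2, 1, 1, 1]), (1152, .apery (-0) [] [2, 1, 2]),
   (6624, .apery (-0) [] [2, 2, 1]), (-19008, .apery (-0) [] [2, 3]),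
   (-1152, .apery (-0) [1] [2, 1, 1]), (23040, .apery (-0) [1, 1, 3] []),
   (-11520, .apery (-0) [1, 3] [1]), (4608, .apery (-0) [1, 3, 1] []),
   (13824, .apery (-0) [1, 4] []), (11520, .apery (-0) [2, 3] []), (5760, .apery (-0) [3] [1, 1]),
   (2304, .apery (-0) [3] [2]), (-2304, .apery (-0) [3, 1] [1]), (-6912, .apery (-0) [4] [1]),
   (2304, .apery (-0) [4, 1] []), (-6336, .apery (-0) [5] []), (-38016, .apery 1 [-4] []),
   (-576, .apery (-1) [] [2, 1, 1]), (11520, .apery (-1) [1, 3] []), (-5760, .apery (-1) [3] [1]),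
   (2304, .apery (-1) [3, 1] []), (6912, .apery (-1) [4] []), (-2880, .apery (-2) [] [1, 1, 1]),
   (-1152, .apery (-2) [] [1, 2]), (-6624, .apery (-2) [] [2, 1]), (19008, .apery (-2) [] [3]),
   (1152, .apery (-2) [1] [1, 1]), (3456, .apery (-2) [3] []), (3456, .apery (-3) [] [1, 1]),
   (1152, .apery (-3) [] [2]), (-1152, .apery (-3) [1] [1]), (3168, .apery (-4) [] [1]),
   (1152, .apery (-4) [1] []), (-23328, .apery (-5) [] []), (-288, .sign true [] (-1) [1, 2, 1, 1]),
   (-1440, .sign true [] (-1) [2, 1, 1, 1]), (-576, .sign true [] (-1) [2, 1, 2]),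
   (-3312, .sign true [] (-1) [2, 2, 1]), (9504, .sign true [] (-1) [2, 3]),
   (576, .sign true [1] (-1) [2, 1, 1]), (-11520, .sign true [1, 1, 3] (-1) []),
   (5760, .sign true [1, 3] (-1) [1]), (-2304, .sign true [1, 3, 1] (-1) []),
   (-6912, .sign true [1, 4] (-1) []), (-5760, .sign true [2, 3] (-1) []),
   (-2880, .sign true [3] (-1) [1, 1]), (-1152, .sign true [3] (-1) [2]),
   (1152, .sign true [3, 1] (-1) [1]), (3456, .sign true [4] (-1) [1]),
   (-1152, .sign true [4, 1] (-1) []), (3168, .sign true [5] (-1) []),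
   (-19008, .sign false [-4] (-2) []), (104040, .stuffle [2] [5]), (-8568, .stuffle [2] [-2, 3]),
   (-8568, .stuffle [2] [-4, 1]), (-8568, .stuffle [2] [-2, 1, 2]),
   (8568, .stuffle [2] [-2, 1, -2]), (-8568, .stuffle [2] [-2, 2, 1]),
   (8568, .stuffle [2] [-2, 2, -1]), (8568, .stuffle [2] [-2, -2, -1]),
   (17136, .stuffle [2] [3, -1, 1]), (17136, .stuffle [2] [-3, 1, -1]),
   (17136, .stuffle [2] [-3, -1, -1]), (135936, .stuffle [-2] [-5]), (-77033, .stuffle [3] [4]),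
   (24016, .stuffle [3] [2, 2]), (3546, .stuffle [3] [-2, 2]), (-1818, .stuffle [3] [-2, -2]),
   (284, .stuffle [3] [3, 1]), (1620, .stuffle [3] [3, -1]), (20232, .stuffle [3] [-3, 1]),
   (1620, .stuffle [3] [-3, -1]), (-23040, .stuffle [3] [-2, 1, 1]), (-26496, .stuffle [-3] [-4]),
   (24822, .stuffle [-4] [3]), (248832, .stuffle [5] [-2]),
   (-103954, .doubleShuffle [1] [0, 0, 0, 0, 1]), (-128250, .doubleShuffle [-1] [0, 0, 0, 0, 1]),
   (5958, .doubleShuffle [0, 1] [0, 0, 0, -1]), (63270, .doubleShuffle [0, -1] [0, 0, 0, 1]),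
   (44562, .doubleShuffle [0, 0, 1] [0, 0, 1]), (21582, .doubleShuffle [0, 0, -1] [0, 0, -1]),
   (-10584, .doubleShuffle [0, 0, 0, -1] [0, 1]), (-77328, .doubleShuffle [0, 0, 0, -1] [0, -1]),
   (134976, .doubleShuffle [0, 0, 0, 0, 1] [1]), (191952, .doubleShuffle [0, 0, 0, 0, 1] [-1]),
   (191952, .doubleShuffle [0, 0, 0, 0, -1] [-1]), (3438, .doubleShuffle [1] [0, 0, 0, 1, -1]),
   (4860, .doubleShuffle [1] [0, 0, 0, -1, 1]), (1692, .doubleShuffle [1] [0, 0, -1, 0, 1]),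
   (9090, .doubleShuffle [1] [0, 0, -1, 0, -1]), (72, .doubleShuffle [1] [0, -1, 0, 0, 1]),
   (-6588, .doubleShuffle [1] [-1, 0, 0, 0, -1]), (-7524, .doubleShuffle [-1] [0, 0, 0, 1, -1]),
   (-2502, .doubleShuffle [-1] [0, 0, 1, 0, 1]), (-342, .doubleShuffle [-1] [0, 0, 1, 0, -1]),
   (828, .doubleShuffle [-1] [0, 0, -1, 0, -1]), (2286, .doubleShuffle [-1] [0, 1, 0, 0, -1]),
   (-2760, .doubleShuffle [0, 1] [0, 0, 1, 1]), (4861, .doubleShuffle [0, 1] [0, 1, 0, 1]),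
   (-3384, .doubleShuffle [0, -1] [0, 0, 1, -1]), (-3384, .doubleShuffle [0, -1] [0, 0, -1, 1]),
   (-2286, .doubleShuffle [0, -1] [0, 1, 0, -1]), (54, .doubleShuffle [0, -1] [0, -1, 0, -1]),
   (4560, .doubleShuffle [1, 1] [0, 0, 0, 1]), (-1422, .doubleShuffle [-1, 1] [0, 0, 0, 1]),
   (-5166, .doubleShuffle [-1, 1] [0, 0, 0, -1]), (26928, .doubleShuffle [-1, -1] [0, 0, 0, 1]),
   (6912, .doubleShuffle [-1, -1] [0, 0, 0, -1]), (6588, .doubleShuffle [0, 0, 1] [-1, 0, -1]),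
   (-504, .doubleShuffle [0, 1, -1] [0, 0, 1]), (-504, .doubleShuffle [0, -1, 1] [0, 0, 1]),
   (-15048, .doubleShuffle [0, -1, -1] [0, 0, 1]), (1296, .doubleShuffle [-1, 0, 1] [0, 0, 1]),
   (-1260, .doubleShuffle [-1, 0, 1] [0, 0, -1]), (-4500, .doubleShuffle [-1, 0, -1] [0, 0, 1]),
   (-5364, .doubleShuffle [0, 0, 1, 1] [0, -1]), (-2358, .doubleShuffle [0, 0, -1, 1] [0, -1]),
   (22932, .doubleShuffle [0, 0, -1, -1] [0, 1]), (-6912, .doubleShuffle [0, 0, -1, -1] [0, -1]),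
   (-9729, .doubleShuffle [0, 1, 0, 1] [0, 1]), (-8334, .doubleShuffle [0, -1, 0, 1] [0, -1]),
   (-6821, .doubleShuffle [1, 0, 0, 1] [0, 1]), (-3906, .doubleShuffle [-1, 0, 0, 1] [0, -1]),
   (-108, .doubleShuffle [-1, 0, 0, -1] [0, 1]), (4464, .doubleShuffle [0, 0, 0, 1, -1] [-1]),
   (4464, .doubleShuffle [0, 0, 0, -1, 1] [-1]), (21504, .doubleShuffle [0, 0, 1, 0, 1] [1]),
   (-666, .doubleShuffle [0, 0, 1, 0, 1] [-1]), (11790, .doubleShuffle [0, 0, 1, 0, -1] [-1]),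
   (-1386, .doubleShuffle [0, 0, -1, 0, 1] [-1]), (-666, .doubleShuffle [0, 0, -1, 0, -1] [-1]),
   (12400, .doubleShuffle [0, 1, 0, 0, 1] [1]), (5904, .doubleShuffle [0, 1, 0, 0, -1] [-1]),
   (-7272, .doubleShuffle [0, -1, 0, 0, 1] [-1]), (4464, .doubleShuffle [1, 0, 0, 0, 1] [1]),
   (-6588, .doubleShuffle [-1, 0, 0, 0, 1] [-1]), (-8496, .doubleShuffle [1] [0, 0, -1, -1, 1]),
   (-5760, .doubleShuffle [1] [0, -1, -1, 0, 1]), (-2880, .doubleShuffle [-1] [0, 0, 1, -1, 1]),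
   (-2880, .doubleShuffle [-1] [0, 0, 1, -1, -1]), (-4320, .doubleShuffle [-1] [0, 0, -1, 1, -1]),
   (-2340, .doubleShuffle [-1] [0, 1, 0, -1, -1]), (108, .doubleShuffle [-1] [0, -1, 0, 1, -1]),
   (-1728, .doubleShuffle [-1] [0, -1, -1, 0, -1]), (4248, .doubleShuffle [-1, 1] [0, 0, 1, -1]),
   (-1440, .doubleShuffle [-1, 1] [0, 0, -1, -1]), (2340, .doubleShuffle [-1, -1] [0, 1, 0, -1]),
   (-108, .doubleShuffle [-1, -1] [0, -1, 0, 1]), (11520, .doubleShuffle [0, 1, 1] [0, -1, -1]),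
   (1368, .doubleShuffle [0, 1, -1] [0, 1, -1]), (2880, .doubleShuffle [0, 1, -1] [0, -1, -1]),
   (-72, .doubleShuffle [0, -1, 1] [0, 1, -1]), (-1512, .doubleShuffle [0, -1, 1] [0, -1, 1]),
   (10080, .doubleShuffle [0, -1, 1] [0, -1, -1]), (8568, .doubleShuffle [1, 0, 1] [0, -1, -1]),
   (1548, .doubleShuffle [1, 0, -1] [0, -1, 1]), (-1548, .doubleShuffle [-1, 0, 1] [0, -1, 1]),
   (1728, .doubleShuffle [-1, 0, -1] [0, -1, -1]), (5760, .doubleShuffle [-1, -1, 1] [0, 0, 1]),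
   (-5760, .doubleShuffle [-1, -1, 1] [0, 0, -1]), (-8496, .doubleShuffle [0, 1, -1, -1] [0, 1]),
   (-9936, .doubleShuffle [0, -1, 1, -1] [0, 1]), (-2880, .doubleShuffle [0, -1, -1, 1] [0, -1]),
   (-1548, .doubleShuffle [1, 0, -1, 1] [0, -1]), (1584, .doubleShuffle [-1, 0, 1, 1] [0, -1]),
   (-5796, .doubleShuffle [-1, 0, 1, -1] [0, 1]), (-4248, .doubleShuffle [-1, 0, -1, 1] [0, 1]),
   (108, .doubleShuffle [-1, 0, -1, 1] [0, -1]), (3420, .doubleShuffle [-1, 0, -1, -1] [0, 1]),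
   (-1728, .doubleShuffle [-1, 0, -1, -1] [0, -1]), (1548, .doubleShuffle [-1, 1, 0, 1] [0, -1]),
   (-1548, .doubleShuffle [-1, 1, 0, -1] [0, 1]), (108, .doubleShuffle [-1, -1, 0, 1] [0, -1]),
   (3420, .doubleShuffle [-1, -1, 0, -1] [0, 1]), (-4320, .doubleShuffle [0, 0, 1, -1, 1] [-1]),
   (-4320, .doubleShuffle [0, 0, -1, 1, -1] [-1]), (-1368, .doubleShuffle [0, 1, 0, 1, -1] [-1]),
   (-1368, .doubleShuffle [0, 1, 0, -1, 1] [-1]), (-1368, .doubleShuffle [0, -1, 0, 1, -1] [-1]),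
   (-1368, .doubleShuffle [0, -1, 0, -1, 1] [-1]), (-1368, .doubleShuffle [1, 0, 0, 1, -1] [-1]),
   (72, .doubleShuffle [1, 0, 0, -1, 1] [-1]), (72, .doubleShuffle [-1, 0, 0, 1, -1] [-1]),
   (-1368, .doubleShuffle [-1, 0, 0, -1, 1] [-1]), (-8568, .mulDoubleShuffle 2 [-1, -1] [0, 1]),
   (-20176, .mulDoubleShuffle 3 [0, 1] [1]), (4896, .mulDoubleShuffle 3 [0, 1] [-1]),
   (7680, .mulDoubleShuffle 3 [0, -1] [1]), (4896, .mulDoubleShuffle 3 [0, -1] [-1]),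
   (6893, .mulDoubleShuffle 3 [1] [0, 1]), (7680, .mulDoubleShuffle 3 [1, 1] [-1]),
   (3840, .mulDoubleShuffle 3 [1, -1] [-1]), (-2730, .mulDoubleShuffle 3 [-1] [0, 1]),
   (-3666, .mulDoubleShuffle 3 [-1] [0, -1]), (3840, .mulDoubleShuffle 3 [-1, 1] [-1]),
   (7680, .mulDoubleShuffle 3 [-1, -1] [-1])]

lemma valid_of_mem_certificate : ∀ x ∈ certificate, x.2.Valid := by decide +kernel

lemma tendsto_eval_scaledSeries_append_zetaProducts :
    Tendsto (fun N => (scaledSeries ++ zetaProducts).eval N) atTop (𝓝 0) :=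
  tendsto_eval_of_cancels valid_of_mem_certificate (by decide +kernel)

lemma LinComb.tendsto_eval_cons {c : ℤ} {x : Term} {C : LinComb} {y z : ℝ}
    (hx : Tendsto (fun N => x.eval N) atTop (𝓝 y)) (hC : Tendsto (fun N => C.eval N) atTop (𝓝 z)) :
    Tendsto (fun N => LinComb.eval N ((c, x) :: C)) atTop (𝓝 (c * y + z)) := by
  simpa only [LinComb.eval_cons] using (hx.const_mul _).add hC

lemma tendsto_eval_zetaProducts :
    Tendsto (fun N => zetaProducts.eval N) atTop
      (𝓝 (-864 * (221 * Real.pi ^ 4 * zeta 3 / 180 + 223 * zeta 7 / 24 -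
        301 * Real.pi ^ 2 * zeta 5 / 36))) := by
  have pos (s : ℕ) (hs : 2 ≤ s := by lia) := tendsto_nestedSum_ofNat hs
  have neg (s : ℕ) (hs : 2 ≤ s := by lia) := tendsto_nestedSum_neg_ofNat hs
  have limit : Tendsto (fun N => zetaProducts.eval N) atTop (𝓝 _) :=
    LinComb.tendsto_eval_cons ((pos 2).mul (pos 5)) <|
    LinComb.tendsto_eval_cons ((neg 2).mul (neg 5)) <|
    LinComb.tendsto_eval_cons ((pos 3).mul (pos 4)) <|
    LinComb.tendsto_eval_cons ((pos 3).mul (neg 4)) <|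
    LinComb.tendsto_eval_cons ((neg 3).mul (neg 4)) <|
    LinComb.tendsto_eval_cons ((neg 4).mul (pos 3)) <|
    LinComb.tendsto_eval_cons ((pos 5).mul (neg 2)) <|
    LinComb.tendsto_eval_cons (pos 7) <|
    LinComb.tendsto_eval_cons (neg 7) (tendsto_const_nhds (x := 0))
  convert limit using 2
  rw [zeta_two, zeta_four]
  push_cast
  ring

lemma tendsto_centralSum :
    Tendsto (fun N => 110 * centralSum [-3, -4] N + 139 * centralSum [7] N) atTop
      (𝓝 (221 * Real.pi ^ 4 * zeta 3 / 180 + 223 * zeta 7 / 24 -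
        301 * Real.pi ^ 2 * zeta 5 / 36)) := by
  have limit := (tendsto_eval_scaledSeries_append_zetaProducts.sub
    tendsto_eval_zetaProducts).div_const 864
  convert limit using 2 with N
  · rw [LinComb.eval_append, add_sub_cancel_right]
    simp only [scaledSeries, LinComb.eval_cons, LinComb.eval_nil, Term.eval]
    push_cast
    ring
  · ring

end AperySum

theorem stmt_15 :
    Tendsto (fun N => ∑ n ∈ Finset.range N,
      (-1:ℝ)^(n+1) / (((n:ℝ)+1)^3 * ((2*(n+1)).choose (n+1) : ℝ)) *
        (110 * A 4 (n+1) + 29 * (-1:ℝ)^(n+1) / ((n:ℝ)+1)^4))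
      atTop (𝓝 (221 * Real.pi^4 * zeta 3 / 180 + 223 * zeta 7 / 24
        - 301 * Real.pi^2 * zeta 5 / 36)) := by
  simp only [AperySum.sum_range_eq_centralSum]
  exact AperySum.tendsto_centralSum.comp (tendsto_add_atTop_nat 1)
end

section
/- $\sum_{n=0}^{\infty} \frac{\binom{2n}{n}}{(2n+1)\,16^n}\left(12 \sum_{j=0}^{n} \frac{(-1)^j}{(2j+1)^2} - \frac{(-1)^n}{(2n+1)^2}\right) = 4\pi G$. -/
open Filter Topology

/-- The Catalan constant `G = ∑_{k ≥ 0} (-1)^k/(2k+1)^2`. -/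
noncomputable def catalan' : ℝ := ∑' k : ℕ, (-1:ℝ)^k / (2*(k:ℝ)+1)^2

/-!
Let `aₙ = C(2n, n) / ((2n + 1) 16ⁿ)`. As `∫₀¹ x²ⁿ log x = -1 / (2n + 1)²`, the `n`-th summand is
`aₙ` times `12 G + ∫₀¹ (-x²)ⁿ (1 - 12 x² / (1 + x²)) log x`. Summing the Taylor series of `arcsin`
at `1 / 2` and of `arsinh` at `x / 2`, the whole series equals `12 G · π / 3` plus
`∫₀¹ (2 arsinh (x / 2) / x) (1 - 12 x² / (1 + x²)) log x`, and this integral vanishes: in terms of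
`v = 1 - exp (-2 arsinh (x / 2))` its integrand is the derivative of a combination of trilogarithms
and products of logarithms. The endpoint `x = 1` is `v = φ⁻¹`, where the duplication and inversion
formulas and Landen's three-term relation evaluate that combination to zero.
-/

section

open Real Set MeasureTheory

theorem eq_of_hasDerivAt_zero_of_continuousOn {E : Type*} [NormedAddCommGroup E]
    [NormedSpace ℝ E] [CompleteSpace E] {f : ℝ → E} {a b : ℝ}
    (hcont : ContinuousOn f (uIcc a b))
    (hderiv : ∀ x ∈ Ioo (min a b) (max a b), HasDerivAt f 0 x) : f b = f a := by
  have h := intervalIntegral.integral_eq_sub_of_hasDeriv_right hcont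
    (fun x hx ↦ (hderiv x hx).hasDerivWithinAt) intervalIntegrable_const
  simpa [sub_eq_zero, eq_comm] using h

theorem continuousAt_mul_of_continuousAt_id_mul {𝕜 : Type*} [NontriviallyNormedField 𝕜]
    {F g : 𝕜 → 𝕜} (hF : DifferentiableAt 𝕜 F 0) (hF0 : F 0 = 0)
    (hg : ContinuousAt (fun x ↦ x * g x) 0) : ContinuousAt (fun x ↦ F x * g x) 0 := by
  have hmul : (fun x ↦ F x * g x) = fun x ↦ dslope F 0 x * (x * g x) := by
    funext x
    have h := sub_smul_dslope F 0 x
    simp only [sub_zero, smul_eq_mul, hF0] at h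
    rw [← h]
    ring
  rw [hmul]
  exact (continuousAt_dslope_same.2 hF).mul hg

theorem continuousOn_mul_of_continuousAt_id_mul {𝕜 : Type*} [NontriviallyNormedField 𝕜]
    {F g : 𝕜 → 𝕜} {s : Set 𝕜} (hs : IsOpen s) (hF : DifferentiableOn 𝕜 F s) (hF0 : F 0 = 0)
    (hg : ContinuousAt (fun x ↦ x * g x) 0) (hg' : ∀ x ≠ 0, ContinuousAt g x) :
    ContinuousOn (fun x ↦ F x * g x) s := by
  intro x hx
  have hFx := hF.differentiableAt (hs.mem_nhds hx)
  rcases eq_or_ne x 0 with rfl | hx0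
  · exact (continuousAt_mul_of_continuousAt_id_mul hFx hF0 hg).continuousWithinAt
  · exact (hFx.continuousAt.mul (hg' x hx0)).continuousWithinAt

theorem continuous_mul_log_sq : Continuous fun x : ℝ ↦ x * log x ^ 2 := by
  have hsqrt {x : ℝ} (hx : 0 ≤ x) : 4 * (√x * log √x) ^ 2 = x * log x ^ 2 := by
    rw [log_sqrt hx, mul_pow, sq_sqrt hx]
    ring
  have hsplit : (fun x : ℝ ↦ x * log x ^ 2) =
      fun x ↦ 4 * (√x * log √x) ^ 2 - 4 * (√(-x) * log √(-x)) ^ 2 := by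
    funext x
    rcases le_total 0 x with hx | hx
    · simp [hsqrt hx, sqrt_eq_zero_of_nonpos (neg_nonpos.2 hx)]
    · simp [hsqrt (neg_nonneg.2 hx), sqrt_eq_zero_of_nonpos hx]
  rw [hsplit]
  have h : Continuous fun x : ℝ ↦ √x * log √x := continuous_mul_log.comp continuous_sqrt
  exact ((h.pow 2).const_mul 4).sub (((h.comp continuous_neg).pow 2).const_mul 4)

theorem intervalIntegrable_log_sq (a b : ℝ) :
    IntervalIntegrable (fun x ↦ log x ^ 2) volume a b := by
  suffices h : ∀ c : ℝ, IntervalIntegrable (fun x ↦ log x ^ 2) volume 0 c from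
    (h a).symm.trans (h b)
  intro c
  refine intervalIntegral.intervalIntegrable_deriv_of_nonneg
    (g := fun x ↦ x * log x ^ 2 - 2 * (x * log x) + 2 * x) ?_ (fun x hx ↦ ?_)
    (fun x _ ↦ sq_nonneg _)
  · exact ((continuous_mul_log_sq.sub (continuous_mul_log.const_mul 2)).add
      (continuous_id.const_mul 2)).continuousOn
  · have hx0 : x ≠ 0 := by
      rintro rfl
      rcases le_total 0 c with hc | hc <;> simp [hc] at hx
    refine ((((hasDerivAt_id x).mul ((hasDerivAt_log hx0).pow 2)).sub
      ((hasDerivAt_mul_log hx0).const_mul 2)).add ((hasDerivAt_id x).const_mul 2)).congr_deriv ?_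
    simp only [id, Pi.pow_apply]
    field_simp
    ring

/-! ### Functional equations of the trilogarithm -/

/-- The integrand defining `rogersTrilog`. Its junk value `0` at `t = 1` is also its limit there. -/
noncomputable def rogersTrilogKernel (t : ℝ) : ℝ := log t ^ 2 / (2 * (1 - t))

/-- A Rogers-type normalisation of the trilogarithm: for `z < 1` it equals
`Li₃ z - log |z| Li₂ z - (1/2) log² |z| log (1 - z)`, so that its functional equations involve
trilogarithms and logarithms but no dilogarithms. `Real.log t` is `log |t|`, hence the integral
also makes sense for negative `z`. -/
noncomputable def rogersTrilog (z : ℝ) : ℝ := ∫ t in (0 : ℝ)..z, rogersTrilogKernel t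

theorem abs_rogersTrilogKernel_le_abs_log {t : ℝ} (ht : 1 / 2 ≤ t) :
    |rogersTrilogKernel t| ≤ |log t| := by
  have ht0 : 0 < t := by linarith
  have hlog : |log t| ≤ 2 * |1 - t| := by
    have hupper : log t ≤ t - 1 := log_le_sub_one_of_pos ht0
    have hlower : (t - 1) / t ≤ log t := by
      simpa [sub_div, ht0.ne'] using one_sub_inv_le_log_of_pos ht0
    rw [div_le_iff₀ ht0] at hlower
    rcases le_total t 1 with ht1 | ht1
    · rw [abs_of_nonpos (log_nonpos ht0.le ht1), abs_of_nonneg (sub_nonneg.2 ht1)]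
      nlinarith [log_nonpos ht0.le ht1]
    · rw [abs_of_nonneg (log_nonneg ht1), abs_of_nonpos (sub_nonpos.2 ht1)]
      linarith
  rcases eq_or_ne t 1 with rfl | ht1
  · simp [rogersTrilogKernel]
  · have : 0 < |1 - t| := abs_pos.2 (sub_ne_zero.2 ht1.symm)
    rw [rogersTrilogKernel, abs_div, abs_mul, abs_two, abs_pow, div_le_iff₀ (by positivity), sq]
    gcongr

theorem measurable_rogersTrilogKernel : Measurable rogersTrilogKernel := by
  unfold rogersTrilogKernel
  fun_prop

theorem intervalIntegrable_rogersTrilogKernel (a b : ℝ) :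
    IntervalIntegrable rogersTrilogKernel volume a b := by
  refine ((intervalIntegrable_log_sq a b).add
    intervalIntegral.intervalIntegrable_log'.abs).mono_fun'
    measurable_rogersTrilogKernel.aestronglyMeasurable (.of_forall fun t ↦ ?_)
  rcases le_total (1 / 2) t with ht | ht
  · exact (abs_rogersTrilogKernel_le_abs_log ht).trans (le_add_of_nonneg_left (sq_nonneg _))
  · refine le_trans ?_ (le_add_of_nonneg_right (abs_nonneg _))
    change |log t ^ 2 / (2 * (1 - t))| ≤ _
    rw [abs_of_nonneg (div_nonneg (sq_nonneg _) (by linarith))]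
    exact div_le_self (sq_nonneg _) (by linarith)

theorem continuousAt_rogersTrilogKernel {z : ℝ} (hz : z ≠ 0) :
    ContinuousAt rogersTrilogKernel z := by
  rcases eq_or_ne z 1 with rfl | hz1
  · have hlog : Tendsto (fun t ↦ |log t|) (𝓝 1) (𝓝 0) := by
      simpa using (continuousAt_log one_ne_zero).abs.tendsto
    have hbound : ∀ᶠ t in 𝓝 (1 : ℝ), ‖rogersTrilogKernel t‖ ≤ |log t| := by
      filter_upwards [lt_mem_nhds (show (1 / 2 : ℝ) < 1 by norm_num)] with t ht
      exact abs_rogersTrilogKernel_le_abs_log ht.le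
    simpa [ContinuousAt, rogersTrilogKernel] using squeeze_zero_norm' hbound hlog
  · have : 2 * (1 - z) ≠ 0 := mul_ne_zero two_ne_zero (sub_ne_zero.2 hz1.symm)
    unfold rogersTrilogKernel
    fun_prop (disch := assumption)

theorem continuous_rogersTrilog : Continuous rogersTrilog :=
  intervalIntegral.continuous_primitive intervalIntegrable_rogersTrilogKernel 0

theorem hasDerivAt_rogersTrilog {z : ℝ} (hz : z ≠ 0) :
    HasDerivAt rogersTrilog (rogersTrilogKernel z) z :=
  intervalIntegral.integral_hasDerivAt_right (intervalIntegrable_rogersTrilogKernel 0 z)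
    measurable_rogersTrilogKernel.stronglyMeasurable.stronglyMeasurableAtFilter
    (continuousAt_rogersTrilogKernel hz)

theorem hasDerivAt_rogersTrilog_comp {f : ℝ → ℝ} {f' l x : ℝ} (hf : HasDerivAt f f' x)
    (hfx : f x ≠ 0) (hl : log (f x) = l) :
    HasDerivAt (fun y ↦ rogersTrilog (f y)) (l ^ 2 / (2 * (1 - f x)) * f') x :=
  hl ▸ (hasDerivAt_rogersTrilog hfx).comp x hf

@[simp]
theorem rogersTrilog_zero : rogersTrilog 0 = 0 := by
  simp [rogersTrilog]

theorem rogersTrilog_sq (z : ℝ) :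
    rogersTrilog (z ^ 2) = 4 * (rogersTrilog z + rogersTrilog (-z)) := by
  have hT := continuous_rogersTrilog
  have hconst := eq_of_hasDerivAt_zero_of_continuousOn (a := 0) (b := z)
    (f := fun z ↦ rogersTrilog (z ^ 2) - 4 * (rogersTrilog z + rogersTrilog (-z)))
    (by fun_prop) fun x hx ↦ ?_
  · simpa [sub_eq_zero] using hconst
  · have hx0 : x ≠ 0 := by
      rintro rfl
      rcases le_total 0 z with hz | hz <;> simp [hz] at hx
    have hsq := hasDerivAt_rogersTrilog_comp (hasDerivAt_pow 2 x) (pow_ne_zero 2 hx0)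
      (log_pow x 2)
    have hpos := hasDerivAt_rogersTrilog_comp (hasDerivAt_id x) hx0 rfl
    have hneg := hasDerivAt_rogersTrilog_comp (hasDerivAt_neg x) (neg_ne_zero.2 hx0)
      (log_neg_eq_log x)
    refine (hsq.sub ((hpos.add hneg).const_mul 4)).congr_deriv ?_
    rcases eq_or_ne (x ^ 2) 1 with hx1 | hx1
    · have hlog : log x = 0 := by simpa [hx1] using (log_pow x 2).symm
      simp [hlog]
    · have hfactor : 1 - x ^ 2 = (1 - x) * (1 + x) := by ring
      obtain ⟨h1, h2⟩ := mul_ne_zero_iff.1 (hfactor ▸ sub_ne_zero.2 hx1.symm)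
      simp only [id, sub_neg_eq_add, hfactor]
      push_cast
      field_simp
      ring

theorem rogersTrilog_inv_of_neg {z : ℝ} (hz : z < 0) :
    rogersTrilog z⁻¹ = rogersTrilog z + log z ^ 3 / 6 := by
  have hneg : ∀ x ∈ uIcc (-1) z, x < 0 := fun x hx ↦ hx.2.trans_lt (by simp [hz])
  have hderiv : ∀ x < 0, HasDerivAt
      (fun x ↦ rogersTrilog x⁻¹ - rogersTrilog x - log x ^ 3 / 6) 0 x := by
    intro x hx
    have hinv := hasDerivAt_rogersTrilog_comp (hasDerivAt_inv hx.ne) (inv_ne_zero hx.ne)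
      (log_inv x)
    refine ((hinv.sub (hasDerivAt_rogersTrilog hx.ne)).sub
      (((hasDerivAt_log hx.ne).pow 3).div_const 6)).congr_deriv ?_
    have hx0 : x ≠ 0 := hx.ne
    have h1x : 1 - x ≠ 0 := by linarith
    have hx1 : x - 1 ≠ 0 := by linarith
    have hden : 1 - x⁻¹ = (x - 1) / x := by
      rw [sub_div, div_self hx.ne, one_div]
    simp only [rogersTrilogKernel, hden]
    field_simp
    ring
  have hconst := eq_of_hasDerivAt_zero_of_continuousOn
    (fun x hx ↦ (hderiv x (hneg x hx)).continuousAt.continuousWithinAt)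
    (fun x hx ↦ hderiv x (hneg x (Ioo_subset_Icc_self hx)))
  simp only [inv_neg, inv_one, log_neg_eq_log, log_one, sub_self, zero_pow three_ne_zero,
    zero_div] at hconst
  linarith

theorem differentiableOn_log_one_sub : DifferentiableOn ℝ (fun x ↦ log (1 - x)) (Iio 1) := by
  have h : ∀ x ∈ Iio (1 : ℝ), 1 - x ≠ 0 := fun x hx ↦ (sub_pos.2 hx).ne'
  fun_prop (disch := assumption)

theorem continuousOn_log_one_sub_sq_mul_log :
    ContinuousOn (fun x ↦ log (1 - x) ^ 2 * log x) (Iio 1) :=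
  continuousOn_mul_of_continuousAt_id_mul isOpen_Iio (differentiableOn_log_one_sub.pow 2) (by simp)
    continuous_mul_log.continuousAt fun _ hx ↦ continuousAt_log hx

theorem continuousOn_log_one_sub_mul_log_sq :
    ContinuousOn (fun x ↦ log (1 - x) * log x ^ 2) (Iio 1) :=
  continuousOn_mul_of_continuousAt_id_mul isOpen_Iio differentiableOn_log_one_sub (by simp)
    continuous_mul_log_sq.continuousAt fun _ hx ↦ (continuousAt_log hx).pow 2

theorem hasDerivAt_log_one_sub {x : ℝ} (hx : x ≠ 1) :
    HasDerivAt (fun y ↦ log (1 - y)) (-(1 - x)⁻¹) x := by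
  simpa [neg_div] using ((hasDerivAt_id x).const_sub 1).log (sub_ne_zero.2 hx.symm)

theorem hasDerivAt_rogersTrilog_neg_div_one_sub {x : ℝ} (hx0 : x ≠ 0) (hx1 : x ≠ 1) :
    HasDerivAt (fun y ↦ rogersTrilog (-(y / (1 - y))))
      (-((log x - log (1 - x)) ^ 2 / (2 * (1 - x)))) x := by
  have h1x : 1 - x ≠ 0 := sub_ne_zero.2 hx1.symm
  have hden : 1 - -(x / (1 - x)) = 1 / (1 - x) := by
    field_simp
    ring
  refine (hasDerivAt_rogersTrilog_comp
    (((hasDerivAt_id x).div ((hasDerivAt_id x).const_sub 1) h1x).neg)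
    (neg_ne_zero.2 (div_ne_zero hx0 h1x))
    ((log_neg_eq_log _).trans (log_div hx0 h1x))).congr_deriv ?_
  simp only [id, Pi.neg_apply, Pi.div_apply, hden]
  field_simp
  ring

theorem rogersTrilog_add_rogersTrilog_one_sub {v : ℝ} (hv0 : 0 < v) (hv1 : v < 1) :
    rogersTrilog v + rogersTrilog (1 - v) + rogersTrilog (-(v / (1 - v))) =
      rogersTrilog 1 - log (1 - v) ^ 2 * log v / 2 + log (1 - v) ^ 3 / 6 := by
  have hT := continuous_rogersTrilog
  have hlt : ∀ x ∈ uIcc 0 v, x < 1 := fun x hx ↦ by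
    rw [uIcc_of_le hv0.le] at hx
    exact hx.2.trans_lt hv1
  have hne : ∀ x ∈ uIcc 0 v, 1 - x ≠ 0 := fun x hx ↦ (sub_pos.2 (hlt x hx)).ne'
  have hlog := continuousOn_log_one_sub_sq_mul_log.mono hlt
  have hconst := eq_of_hasDerivAt_zero_of_continuousOn (a := 0) (b := v)
    (f := fun v ↦ rogersTrilog v + rogersTrilog (1 - v) + rogersTrilog (-(v / (1 - v)))
      + log (1 - v) ^ 2 * log v / 2 - log (1 - v) ^ 3 / 6)
    (by fun_prop (disch := assumption)) fun x hx ↦ ?_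
  · simp only [log_zero, sub_zero, neg_zero, zero_div, mul_zero, log_one, rogersTrilog_zero,
      zero_add, add_zero, ne_eq, OfNat.ofNat_ne_zero, not_false_eq_true, zero_pow] at hconst
    linarith
  · simp only [hv0.le, inf_of_le_left, sup_of_le_right, mem_Ioo] at hx
    obtain ⟨hx0, hxv⟩ := hx
    have hx1 : x < 1 := hxv.trans hv1
    have h1x : 0 < 1 - x := sub_pos.2 hx1
    have hlogx := hasDerivAt_log hx0.ne'
    have hlog1x := hasDerivAt_log_one_sub hx1.ne
    have h1 := hasDerivAt_rogersTrilog hx0.ne'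
    have h2 := hasDerivAt_rogersTrilog_comp ((hasDerivAt_id x).const_sub 1) h1x.ne' rfl
    have h3 := hasDerivAt_rogersTrilog_neg_div_one_sub hx0.ne' hx1.ne
    refine ((((h1.add h2).add h3).add (((hlog1x.pow 2).mul hlogx).div_const 2)).sub
      ((hlog1x.pow 3).div_const 6)).congr_deriv ?_
    simp only [rogersTrilogKernel, id, Pi.pow_apply, sub_sub_cancel]
    push_cast
    field_simp
    ring

/-! ### The ladder at the golden ratio -/

/-- The combination of trilogarithms behind the `π G` series: its derivative is elementary, and it
vanishes at `0` and at `φ⁻¹`. -/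
noncomputable def trilogLadder (v : ℝ) : ℝ :=
  -2 * rogersTrilog (-(v ^ 2 / (1 - v))) - rogersTrilog (-(v / (1 - v) ^ 2))
    + rogersTrilog (-v ^ 3) - 9 * rogersTrilog (-v) - 15 / 2 * rogersTrilog v
    + 3 / 2 * rogersTrilog (-(v / (1 - v)))
    + log (1 - v) * log v ^ 2 / 2 - log (1 - v) ^ 2 * log v / 2 + log (1 - v) ^ 3 / 2

theorem continuousOn_trilogLadder : ContinuousOn trilogLadder (Iio 1) := by
  have hT := continuous_rogersTrilog
  have hne : ∀ x ∈ Iio (1 : ℝ), 1 - x ≠ 0 := fun x hx ↦ (sub_pos.2 hx).ne'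
  have hne2 : ∀ x ∈ Iio (1 : ℝ), (1 - x) ^ 2 ≠ 0 := fun x hx ↦ pow_ne_zero 2 (hne x hx)
  have h1 := continuousOn_log_one_sub_sq_mul_log
  have h2 := continuousOn_log_one_sub_mul_log_sq
  unfold trilogLadder
  fun_prop (disch := assumption)

theorem hasDerivAt_rogersTrilog_neg_sq_div_one_sub {x : ℝ} (hx0 : x ≠ 0) (hx1 : x ≠ 1) :
    HasDerivAt (fun y ↦ rogersTrilog (-(y ^ 2 / (1 - y))))
      (-((2 * log x - log (1 - x)) ^ 2 * (x * (2 - x)) / (2 * (1 - x) * (1 - x + x ^ 2)))) x := by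
  have h1x : 1 - x ≠ 0 := sub_ne_zero.2 hx1.symm
  have hq : 1 - x + x ^ 2 ≠ 0 := by nlinarith [sq_nonneg (1 - 2 * x)]
  have hden : 1 - -(x ^ 2 / (1 - x)) = (1 - x + x ^ 2) / (1 - x) := by
    field_simp
    ring
  refine (hasDerivAt_rogersTrilog_comp (l := 2 * log x - log (1 - x))
    (((hasDerivAt_pow 2 x).div ((hasDerivAt_id x).const_sub 1) h1x).neg)
    (neg_ne_zero.2 (div_ne_zero (pow_ne_zero 2 hx0) h1x))
    (by simp [log_div, hx0, h1x])).congr_deriv ?_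
  simp only [id, Pi.neg_apply, Pi.div_apply, hden]
  push_cast
  field_simp
  ring

theorem hasDerivAt_rogersTrilog_neg_div_one_sub_sq {x : ℝ} (hx0 : x ≠ 0) (hx1 : x ≠ 1) :
    HasDerivAt (fun y ↦ rogersTrilog (-(y / (1 - y) ^ 2)))
      (-((log x - 2 * log (1 - x)) ^ 2 * (1 + x) / (2 * (1 - x) * (1 - x + x ^ 2)))) x := by
  have h1x : 1 - x ≠ 0 := sub_ne_zero.2 hx1.symm
  have hq : 1 - x + x ^ 2 ≠ 0 := by nlinarith [sq_nonneg (1 - 2 * x)]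
  have hden : 1 - -(x / (1 - x) ^ 2) = (1 - x + x ^ 2) / (1 - x) ^ 2 := by
    field_simp
    ring
  refine (hasDerivAt_rogersTrilog_comp (l := log x - 2 * log (1 - x))
    (((hasDerivAt_id x).div (((hasDerivAt_id x).const_sub 1).pow 2) (pow_ne_zero 2 h1x)).neg)
    (neg_ne_zero.2 (div_ne_zero hx0 (pow_ne_zero 2 h1x)))
    (by simp [log_div, hx0, h1x])).congr_deriv ?_
  simp only [id, Pi.neg_apply, Pi.div_apply, Pi.pow_apply, hden]
  push_cast
  field_simp
  ring

theorem hasDerivAt_trilogLadder {v : ℝ} (hv0 : 0 < v) (hv1 : v < 1) :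
    HasDerivAt trilogLadder ((log (1 - v) * log v - log (1 - v) ^ 2 / 2) *
      (1 / v - 11 / 2 / (1 - v) - 6 * (2 * v - 1) / (1 - v + v ^ 2))) v := by
  have h1v : 0 < 1 - v := sub_pos.2 hv1
  have hfactor : 1 - -v ^ 3 = (1 + v) * (1 - v + v ^ 2) := by ring
  have hlogv := hasDerivAt_log hv0.ne'
  have hlog1v := hasDerivAt_log_one_sub hv1.ne
  have hsqDiv := hasDerivAt_rogersTrilog_neg_sq_div_one_sub hv0.ne' hv1.ne
  have hdivSq := hasDerivAt_rogersTrilog_neg_div_one_sub_sq hv0.ne' hv1.ne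
  have hcube := hasDerivAt_rogersTrilog_comp (l := 3 * log v)
    (hasDerivAt_pow 3 v).neg (neg_ne_zero.2 (pow_pos hv0 3).ne') (by simp)
  have hneg := hasDerivAt_rogersTrilog_comp (hasDerivAt_neg v) (neg_ne_zero.2 hv0.ne')
    (log_neg_eq_log v)
  have hself := hasDerivAt_rogersTrilog hv0.ne'
  have hlanden := hasDerivAt_rogersTrilog_neg_div_one_sub hv0.ne' hv1.ne
  refine (((((((((hsqDiv.const_mul (-2)).sub hdivSq).add hcube).sub (hneg.const_mul 9)).sub
    (hself.const_mul (15 / 2))).add (hlanden.const_mul (3 / 2))).add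
    ((hlog1v.mul (hlogv.pow 2)).div_const 2)).sub
    (((hlog1v.pow 2).mul hlogv).div_const 2)).add ((hlog1v.pow 3).div_const 2)).congr_deriv ?_
  simp only [rogersTrilogKernel, Pi.neg_apply, Pi.pow_apply, hfactor, sub_neg_eq_add]
  push_cast
  field_simp
  ring

@[simp]
theorem trilogLadder_zero : trilogLadder 0 = 0 := by
  simp [trilogLadder]

theorem four_mul_rogersTrilog_neg_one : 4 * rogersTrilog (-1) = -3 * rogersTrilog 1 := by
  have h := rogersTrilog_sq 1
  rw [one_pow] at h
  linarith

section goldenRatio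

open goldenRatio

theorem one_sub_inv_goldenRatio : 1 - φ⁻¹ = φ⁻¹ ^ 2 := by
  have h : φ * φ⁻¹ = 1 := mul_inv_cancel₀ goldenRatio_ne_zero
  linear_combination φ⁻¹ ^ 2 * goldenRatio_sq - (φ * φ⁻¹ + 1 - φ⁻¹) * h

theorem inv_goldenRatio_lt_one : φ⁻¹ < 1 := inv_lt_one_of_one_lt₀ one_lt_goldenRatio

theorem five_mul_rogersTrilog_inv_goldenRatio :
    5 * (rogersTrilog φ⁻¹ + rogersTrilog (-φ⁻¹)) = rogersTrilog 1 - 5 / 6 * log φ⁻¹ ^ 3 := by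
  have hr0 : 0 < φ⁻¹ := inv_pos.2 goldenRatio_pos
  have hduplication := rogersTrilog_sq φ⁻¹
  have hlanden := rogersTrilog_add_rogersTrilog_one_sub hr0 inv_goldenRatio_lt_one
  have hinversion := rogersTrilog_inv_of_neg (neg_lt_zero.2 hr0)
  have hdiv : φ⁻¹ / φ⁻¹ ^ 2 = φ := by field_simp
  rw [one_sub_inv_goldenRatio, hdiv, log_pow] at hlanden
  rw [inv_neg, inv_inv, log_neg_eq_log] at hinversion
  push_cast at hlanden
  linarith

theorem trilogLadder_inv_goldenRatio : trilogLadder φ⁻¹ = 0 := by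
  have hr0 : 0 < φ⁻¹ := inv_pos.2 goldenRatio_pos
  have hinversion := rogersTrilog_inv_of_neg (neg_lt_zero.2 hr0)
  have hinversion3 := rogersTrilog_inv_of_neg (neg_lt_zero.2 (pow_pos hr0 3))
  have hdiv1 : φ⁻¹ ^ 2 / φ⁻¹ ^ 2 = 1 := div_self (pow_pos hr0 2).ne'
  have hdiv2 : φ⁻¹ / (φ⁻¹ ^ 2) ^ 2 = φ ^ 3 := by field_simp
  have hdiv3 : φ⁻¹ / φ⁻¹ ^ 2 = φ := by field_simp
  rw [inv_neg, inv_inv, log_neg_eq_log] at hinversion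
  rw [inv_neg, ← inv_pow, inv_inv, log_neg_eq_log, log_pow] at hinversion3
  rw [trilogLadder, one_sub_inv_goldenRatio, hdiv1, hdiv2, hdiv3, log_pow, hinversion, hinversion3]
  push_cast
  linarith [four_mul_rogersTrilog_neg_one, five_mul_rogersTrilog_inv_goldenRatio]

end goldenRatio

/-! ### The substitution `v = 1 - exp (-2 arsinh (x / 2))` -/

/-- The substitution turning the derivative of `trilogLadder` into `log x * arsinh (x / 2)` times a
rational function of `x`. -/
noncomputable def arsinhSubst (x : ℝ) : ℝ := 1 - exp (-(2 * arsinh (x / 2)))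

theorem continuous_arsinhSubst : Continuous arsinhSubst :=
  continuous_const.sub ((continuous_id.div_const 2).arsinh.const_mul 2).neg.rexp

theorem arsinhSubst_lt_one (x : ℝ) : arsinhSubst x < 1 := sub_lt_self 1 (exp_pos _)

@[simp]
theorem arsinhSubst_zero : arsinhSubst 0 = 0 := by
  simp [arsinhSubst]

theorem exp_arsinh_half_sub_inv (x : ℝ) :
    exp (arsinh (x / 2)) - (exp (arsinh (x / 2)))⁻¹ = x := by
  have h := sinh_arsinh (x / 2)
  rw [sinh_eq, exp_neg] at h
  linarith

theorem arsinhSubst_eq_div_exp (x : ℝ) : arsinhSubst x = x / exp (arsinh (x / 2)) := by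
  have hE := exp_ne_zero (arsinh (x / 2))
  nth_rw 2 [← exp_arsinh_half_sub_inv x]
  rw [arsinhSubst, exp_neg, two_mul, exp_add]
  field_simp

theorem arsinhSubst_one : arsinhSubst 1 = goldenRatio⁻¹ := by
  have hexp : exp (arsinh (1 / 2)) = goldenRatio := by
    have hsqrt : √(1 + (1 / 2 : ℝ) ^ 2) = √5 / 2 := by
      rw [show 1 + (1 / 2 : ℝ) ^ 2 = 5 / 2 ^ 2 by norm_num, sqrt_div (by norm_num),
        sqrt_sq zero_le_two]
    rw [exp_arsinh, hsqrt, goldenRatio]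
    ring
  rw [arsinhSubst_eq_div_exp, hexp, one_div]

theorem log_one_sub_arsinhSubst (x : ℝ) : log (1 - arsinhSubst x) = -(2 * arsinh (x / 2)) := by
  simp [arsinhSubst]

theorem log_arsinhSubst {x : ℝ} (hx : x ≠ 0) :
    log (arsinhSubst x) = log x - arsinh (x / 2) := by
  rw [arsinhSubst_eq_div_exp, log_div hx (exp_ne_zero _), log_exp]

theorem arsinhSubst_pos {x : ℝ} (hx : 0 < x) : 0 < arsinhSubst x := by
  rw [arsinhSubst_eq_div_exp]
  positivity

theorem hasDerivAt_arsinh_half (x : ℝ) :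
    HasDerivAt (fun y ↦ arsinh (y / 2))
      (exp (arsinh (x / 2)) + (exp (arsinh (x / 2)))⁻¹)⁻¹ x := by
  refine ((hasDerivAt_id x).div_const 2).arsinh.congr_deriv ?_
  rw [id, ← cosh_arsinh, cosh_eq, exp_neg, smul_eq_mul]
  field_simp

theorem hasDerivAt_arsinhSubst (x : ℝ) :
    HasDerivAt arsinhSubst (2 * (exp (arsinh (x / 2)) ^ 2)⁻¹ *
      (exp (arsinh (x / 2)) + (exp (arsinh (x / 2)))⁻¹)⁻¹) x := by
  refine (((hasDerivAt_arsinh_half x).const_mul 2).neg.exp.const_sub 1).congr_deriv ?_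
  simp only [Pi.neg_apply]
  rw [exp_neg, two_mul, exp_add]
  ring

theorem ladder_factor_eq_of_eq_sub_inv {E : ℝ} (hE : 1 < E) {v x : ℝ}
    (hv : v = x / E) (hx : x = E - E⁻¹) :
    (1 / v - 11 / 2 / (1 - v) - 6 * (2 * v - 1) / (1 - v + v ^ 2)) *
      (2 * (E ^ 2)⁻¹ * (E + E⁻¹)⁻¹) = (1 - 12 * x ^ 2 / (1 + x ^ 2)) / x := by
  have hE0 : E ≠ 0 := by positivity
  have hE1 : 0 < E ^ 2 - 1 := by nlinarith
  have hE2 : E ^ 2 + 1 ≠ 0 := by positivity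
  have hE4 : E ^ 2 * (E ^ 2 - 1) + 1 ≠ 0 := by positivity
  have hx' : x = (E ^ 2 - 1) / E := by
    rw [hx]
    field_simp
  have hv' : v = (E ^ 2 - 1) / E ^ 2 := by
    rw [hv, hx']
    field_simp
  have h1v : 1 - v = 1 / E ^ 2 := by
    rw [hv']
    field_simp
    ring
  have hq : 1 - v + v ^ 2 = (E ^ 2 * (E ^ 2 - 1) + 1) / E ^ 4 := by
    rw [hv']
    field_simp
    ring
  have hx2 : 1 + x ^ 2 = (E ^ 2 * (E ^ 2 - 1) + 1) / E ^ 2 := by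
    rw [hx']
    field_simp
    ring
  have hs : E + E⁻¹ = (E ^ 2 + 1) / E := by
    field_simp
  rw [hq, h1v, hx2, hs, hx', hv']
  field_simp
  ring

theorem hasDerivAt_trilogLadder_arsinhSubst {x : ℝ} (hx : 0 < x) :
    HasDerivAt (fun y ↦ -trilogLadder (arsinhSubst y))
      (log x * (2 * arsinh (x / 2) / x * (1 - 12 * x ^ 2 / (1 + x ^ 2)))) x := by
  refine ((hasDerivAt_trilogLadder (arsinhSubst_pos hx) (arsinhSubst_lt_one x)).comp x
    (hasDerivAt_arsinhSubst x)).neg.congr_deriv ?_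
  rw [mul_assoc, ladder_factor_eq_of_eq_sub_inv (one_lt_exp_iff.2 (arsinh_pos_iff.2 (half_pos hx)))
    (arsinhSubst_eq_div_exp x) (exp_arsinh_half_sub_inv x).symm, log_one_sub_arsinhSubst,
    log_arsinhSubst hx.ne']
  ring

/-! ### Arcsine coefficients -/

theorem multichoose_inv_two_eq_centralBinom_div (n : ℕ) :
    Ring.multichoose (2⁻¹ : ℝ) n = n.centralBinom / 4 ^ n := by
  have h (n : ℕ) : (n.factorial : ℝ) * Ring.multichoose (2⁻¹ : ℝ) n =
      (ascPochhammer ℝ n).eval 2⁻¹ := by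
    rw [← nsmul_eq_mul, Ring.factorial_nsmul_multichoose_eq_ascPochhammer,
      Polynomial.ascPochhammer_smeval_eq_eval]
  induction n with
  | zero => simp
  | succ n ih =>
    have hfact : (n.factorial : ℝ) ≠ 0 := by positivity
    have hcentral : ((n + 1 : ℕ) : ℝ) * (n + 1).centralBinom =
        2 * (2 * n + 1) * n.centralBinom := by
      exact_mod_cast Nat.succ_mul_centralBinom_succ n
    have hsucc := h (n + 1)
    rw [ascPochhammer_succ_eval, ← h n, ih, Nat.factorial_succ] at hsucc
    push_cast at hsucc hcentral
    apply mul_left_cancel₀ (mul_ne_zero (Nat.cast_add_one_ne_zero n) hfact)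
    rw [hsucc]
    field_simp
    linear_combination (-2 * 4 ^ n : ℝ) * hcentral

theorem hasSum_centralBinom_mul_pow {y : ℝ} (hy : |y| < 1) :
    HasSum (fun n : ℕ ↦ (n.centralBinom : ℝ) / 4 ^ n * y ^ n) (√(1 - y))⁻¹ := by
  have h := (one_div_one_sub_rpow_hasFPowerSeriesOnBall_zero 2⁻¹).hasSum (y := y)
    (by simpa [enorm_eq_nnnorm, ← NNReal.coe_lt_coe] using hy)
  simpa [FormalMultilinearSeries.ofScalars, ← Ring.multichoose_eq,
    multichoose_inv_two_eq_centralBinom_div, sqrt_eq_rpow, mul_comm] using h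

/-- The Taylor coefficient of `x ^ (2 * n + 1)` in `arcsin x`. -/
noncomputable def arcsinCoeff (n : ℕ) : ℝ := n.centralBinom / (4 ^ n * (2 * n + 1))

theorem arcsinCoeff_div_four_pow (n : ℕ) :
    arcsinCoeff n / 4 ^ n = ((2 * n).choose n : ℝ) / ((2 * (n : ℝ) + 1) * 16 ^ n) := by
  rw [arcsinCoeff, Nat.centralBinom_eq_two_mul_choose, div_div,
    show (16 : ℝ) = 4 * 4 by norm_num, mul_pow]
  ring

theorem hasSum_arcsinCoeff_mul_pow {f : ℝ → ℝ} {ε x : ℝ} (hε : |ε| ≤ 1) (hx : |x| < 1)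
    (hf : ∀ y ∈ uIcc 0 x, HasDerivAt f (√(1 - ε * y ^ 2))⁻¹ y) (hf0 : f 0 = 0) :
    HasSum (fun n ↦ arcsinCoeff n * ε ^ n * x ^ (2 * n + 1)) (f x) := by
  have hx2 : x ^ 2 < 1 := (sq_lt_one_iff_abs_lt_one x).2 hx
  have hsq : ∀ y ∈ uIcc 0 x, |ε * y ^ 2| ≤ x ^ 2 := fun y hy ↦ by
    have hy : |y| ≤ |x| := by simpa using abs_sub_left_of_mem_uIcc hy
    rw [abs_mul, abs_sq]
    exact (mul_le_of_le_one_left (sq_nonneg y) hε).trans (sq_le_sq.2 hy)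
  have hint : IntervalIntegrable (fun y ↦ (√(1 - ε * y ^ 2))⁻¹) volume 0 x := by
    have hne : ∀ y ∈ uIcc 0 x, √(1 - ε * y ^ 2) ≠ 0 := fun y hy ↦
      (sqrt_pos.2 (sub_pos.2 ((le_abs_self _).trans_lt ((hsq y hy).trans_lt hx2)))).ne'
    exact ContinuousOn.intervalIntegrable (by fun_prop (disch := assumption))
  have hbinom := hasSum_centralBinom_mul_pow (y := x ^ 2) (by rwa [abs_sq])
  have h := intervalIntegral.hasSum_integral_of_dominated_convergence (a := 0) (b := x)
    (μ := volume) (F := fun (n : ℕ) y ↦ (n.centralBinom : ℝ) / 4 ^ n * (ε * y ^ 2) ^ n)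
    (f := fun y ↦ (√(1 - ε * y ^ 2))⁻¹)
    (fun n _ ↦ (n.centralBinom : ℝ) / 4 ^ n * (x ^ 2) ^ n)
    (fun n ↦ by fun_prop) (fun n ↦ .of_forall fun y hy ↦ ?_)
    (.of_forall fun y _ ↦ hbinom.summable) intervalIntegrable_const
    (.of_forall fun y hy ↦ hasSum_centralBinom_mul_pow
      ((hsq y (uIoc_subset_uIcc hy)).trans_lt hx2))
  · rw [intervalIntegral.integral_eq_sub_of_hasDerivAt hf hint, hf0, sub_zero] at h
    refine h.congr_fun fun n ↦ ?_
    simp only [mul_pow, ← pow_mul, intervalIntegral.integral_const_mul, integral_pow, arcsinCoeff]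
    push_cast
    field_simp
    simp
  · rw [norm_mul, norm_of_nonneg (by positivity), norm_pow, norm_eq_abs]
    gcongr
    exact hsq y (uIoc_subset_uIcc hy)

theorem hasSum_arcsin {x : ℝ} (hx : |x| < 1) :
    HasSum (fun n ↦ arcsinCoeff n * x ^ (2 * n + 1)) (arcsin x) := by
  have h := hasSum_arcsinCoeff_mul_pow (ε := 1) (by simp) hx (fun y hy ↦ ?_) arcsin_zero
  · simpa using h
  · have hy : |y| < 1 := (by simpa using abs_sub_left_of_mem_uIcc hy : |y| ≤ |x|).trans_lt hx
    simpa using hasDerivAt_arcsin (abs_lt.1 hy).1.ne' (abs_lt.1 hy).2.ne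

theorem hasSum_arsinh {x : ℝ} (hx : |x| < 1) :
    HasSum (fun n ↦ arcsinCoeff n * (-1) ^ n * x ^ (2 * n + 1)) (arsinh x) := by
  refine hasSum_arcsinCoeff_mul_pow (by simp) hx (fun y _ ↦ ?_) arsinh_zero
  simpa using hasDerivAt_arsinh y

theorem hasSum_arcsinCoeff_div_four_pow : HasSum (fun n ↦ arcsinCoeff n / 4 ^ n) (π / 3) := by
  have harcsin : arcsin (1 / 2) = π / 6 := by
    rw [← sin_pi_div_six]
    exact arcsin_sin (by linarith [pi_pos]) (by linarith [pi_pos])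
  have h := (hasSum_arcsin (x := 1 / 2) (by norm_num [abs_of_pos])).mul_left 2
  rw [harcsin, show 2 * (π / 6) = π / 3 by ring] at h
  refine h.congr_fun fun n ↦ ?_
  have hpow : (1 / 2 : ℝ) ^ (2 * n + 1) = 1 / 4 ^ n * (1 / 2) := by
    rw [pow_succ, pow_mul, ← one_div_pow]
    norm_num
  rw [hpow]
  ring

theorem hasSum_arcsinCoeff_div_four_pow_mul_neg_sq_pow {x : ℝ} (hx0 : x ≠ 0) (hx : |x| < 2) :
    HasSum (fun n ↦ arcsinCoeff n / 4 ^ n * (-x ^ 2) ^ n) (2 * arsinh (x / 2) / x) := by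
  have hx2 : |x / 2| < 1 := by
    rw [abs_div, abs_two]
    linarith
  have h := ((hasSum_arsinh hx2).mul_left 2).div_const x
  refine h.congr_fun fun n ↦ ?_
  have hpow : (x / 2) ^ (2 * n + 1) = (x ^ 2) ^ n / 4 ^ n * (x / 2) := by
    rw [pow_succ, pow_mul, div_pow, div_pow]
    norm_num
  rw [hpow, neg_pow]
  field_simp

/-! ### Logarithmic integrals and the Catalan constant -/

theorem intervalIntegrable_log_mul {a b : ℝ} {g : ℝ → ℝ} (hg : ContinuousOn g (uIcc a b)) :
    IntervalIntegrable (fun x ↦ log x * g x) volume a b :=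
  intervalIntegral.intervalIntegrable_log'.mul_continuousOn hg

theorem integral_log_mul_pow (m : ℕ) :
    ∫ x in (0 : ℝ)..1, log x * x ^ m = -1 / ((m : ℝ) + 1) ^ 2 := by
  have hcont : Continuous fun x : ℝ ↦
      x ^ m * (x * log x) / (m + 1) - x ^ (m + 1) / ((m : ℝ) + 1) ^ 2 :=
    (((continuous_pow m).mul continuous_mul_log).div_const _).sub
      ((continuous_pow (m + 1)).div_const _)
  have hderiv : ∀ x ∈ Ioo (0 : ℝ) 1, HasDerivAt
      (fun x : ℝ ↦ x ^ m * (x * log x) / (m + 1) - x ^ (m + 1) / ((m : ℝ) + 1) ^ 2)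
      (log x * x ^ m) x := by
    intro x hx
    have hpow := hasDerivAt_pow (m + 1) x
    have hx0 := hx.1.ne'
    refine (((hpow.mul (hasDerivAt_log hx0)).div_const ((m : ℝ) + 1)).sub
      (hpow.div_const (((m : ℝ) + 1) ^ 2))).congr_of_eventuallyEq ?_ |>.congr_deriv ?_
    · exact .of_forall fun y ↦ by simp only [Pi.sub_apply, Pi.mul_apply]; ring
    · push_cast
      field_simp
      ring
  rw [intervalIntegral.integral_eq_sub_of_hasDerivAt_of_le zero_le_one hcont.continuousOn hderiv
    (intervalIntegrable_log_mul (by fun_prop))]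
  simp [neg_div]

theorem integral_log_mul_neg_sq_pow (n : ℕ) :
    ∫ x in (0 : ℝ)..1, log x * (-x ^ 2) ^ n = -((-1) ^ n / (2 * (n : ℝ) + 1) ^ 2) := by
  have h (x : ℝ) : log x * (-x ^ 2) ^ n = (-1) ^ n * (log x * x ^ (2 * n)) := by
    rw [neg_pow, ← pow_mul]
    ring
  simp only [h, intervalIntegral.integral_const_mul, integral_log_mul_pow]
  push_cast
  ring

theorem sum_range_neg_one_pow_div_sq (n : ℕ) :
    ∑ j ∈ Finset.range n, (-1 : ℝ) ^ j / (2 * (j : ℝ) + 1) ^ 2 =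
      (∫ x in (0 : ℝ)..1, log x * ((-x ^ 2) ^ n / (1 + x ^ 2))) -
        ∫ x in (0 : ℝ)..1, log x * (1 / (1 + x ^ 2)) := by
  have hne : ∀ x : ℝ, 1 + x ^ 2 ≠ 0 := fun x ↦ by positivity
  rw [← intervalIntegral.integral_sub
    (intervalIntegrable_log_mul (by fun_prop (disch := simp [hne])))
    (intervalIntegrable_log_mul (by fun_prop (disch := simp [hne])))]
  have hgeom (x : ℝ) : log x * ((-x ^ 2) ^ n / (1 + x ^ 2)) - log x * (1 / (1 + x ^ 2)) =
      -∑ j ∈ Finset.range n, log x * (-x ^ 2) ^ j := by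
    have h := geom_sum_mul_neg (-x ^ 2) n
    rw [sub_neg_eq_add] at h
    rw [← Finset.mul_sum, eq_div_of_mul_eq (hne x) h]
    ring
  simp only [hgeom]
  rw [intervalIntegral.integral_neg, intervalIntegral.integral_finsetSum fun j _ ↦
    intervalIntegrable_log_mul (by fun_prop)]
  simp [integral_log_mul_neg_sq_pow]

theorem abs_neg_sq_pow_le_one {x : ℝ} (hx : x ∈ uIoc 0 1) (n : ℕ) : |(-x ^ 2) ^ n| ≤ 1 := by
  rw [uIoc_of_le zero_le_one] at hx
  rw [abs_pow, abs_neg, abs_sq]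
  exact pow_le_one₀ (sq_nonneg x) (pow_le_one₀ hx.1.le hx.2)

theorem tendsto_integral_log_mul_neg_sq_pow {g : ℝ → ℝ} (hg : ContinuousOn g (uIcc 0 1)) :
    Tendsto (fun n : ℕ ↦ ∫ x in (0 : ℝ)..1, log x * ((-x ^ 2) ^ n * g x)) atTop (𝓝 0) := by
  have hint (n : ℕ) : IntervalIntegrable (fun x ↦ log x * ((-x ^ 2) ^ n * g x)) volume 0 1 :=
    intervalIntegrable_log_mul (by fun_prop)
  have h := intervalIntegral.tendsto_integral_filter_of_dominated_convergence (l := atTop)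
    (f := fun _ ↦ (0 : ℝ)) (fun x ↦ |log x * g x|)
    (.of_forall fun n ↦ (hint n).aestronglyMeasurable_restrict_uIoc)
    (.of_forall fun n ↦ .of_forall fun x hx ↦ ?_) (intervalIntegrable_log_mul hg).abs
    (.of_forall fun x hx ↦ ?_)
  · simpa using h
  · rw [norm_eq_abs, mul_left_comm, abs_mul]
    exact mul_le_of_le_one_left (abs_nonneg _) (abs_neg_sq_pow_le_one hx n)
  · rw [uIoc_of_le zero_le_one] at hx
    rcases hx.2.eq_or_lt with rfl | hx1
    · simp
    · have hpow : Tendsto (fun n : ℕ ↦ (-x ^ 2) ^ n) atTop (𝓝 0) := by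
        apply tendsto_pow_atTop_nhds_zero_of_abs_lt_one
        rw [abs_neg, abs_sq]
        exact pow_lt_one₀ hx.1.le hx1 two_ne_zero
      simpa using (hpow.mul_const (g x)).const_mul (log x)

theorem catalan'_eq_neg_integral :
    catalan' = -∫ x in (0 : ℝ)..1, log x * (1 / (1 + x ^ 2)) := by
  have hne : ∀ x : ℝ, 1 + x ^ 2 ≠ 0 := fun x ↦ by positivity
  have hsummable : Summable fun k : ℕ ↦ (-1 : ℝ) ^ k / (2 * (k : ℝ) + 1) ^ 2 := by
    have h := (summable_one_div_nat_pow.2 one_lt_two).comp_injective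
      (i := fun k : ℕ ↦ 2 * k + 1) fun _ _ h ↦ by simpa using h
    refine .of_norm (h.congr fun k ↦ ?_)
    simp [abs_of_nonneg (by positivity : (0 : ℝ) ≤ 2 * k + 1)]
  have hremainder := tendsto_integral_log_mul_neg_sq_pow (g := fun x ↦ 1 / (1 + x ^ 2))
    (by fun_prop (disch := simp [hne]))
  have h := hremainder.sub_const (∫ x in (0 : ℝ)..1, log x * (1 / (1 + x ^ 2)))
  rw [zero_sub] at h
  refine tendsto_nhds_unique hsummable.hasSum.tendsto_sum_nat (h.congr fun n ↦ ?_)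
  simp only [sum_range_neg_one_pow_div_sq, mul_one_div]

theorem mul_sum_range_sub_eq_mul_catalan'_add_integral (c : ℝ) (n : ℕ) :
    c * ∑ j ∈ Finset.range (n + 1), (-1 : ℝ) ^ j / (2 * (j : ℝ) + 1) ^ 2
        - (-1) ^ n / (2 * (n : ℝ) + 1) ^ 2 =
      c * catalan' +
        ∫ x in (0 : ℝ)..1, log x * ((-x ^ 2) ^ n * (1 - c * x ^ 2 / (1 + x ^ 2))) := by
  have hne : ∀ x : ℝ, 1 + x ^ 2 ≠ 0 := fun x ↦ by positivity
  have h (x : ℝ) : log x * ((-x ^ 2) ^ n * (1 - c * x ^ 2 / (1 + x ^ 2))) =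
      log x * (-x ^ 2) ^ n + c * (log x * ((-x ^ 2) ^ (n + 1) / (1 + x ^ 2))) := by
    rw [pow_succ]
    ring
  simp only [h]
  rw [intervalIntegral.integral_add (intervalIntegrable_log_mul (by fun_prop))
    ((intervalIntegrable_log_mul (by fun_prop (disch := simp [hne]))).const_mul c),
    intervalIntegral.integral_const_mul, integral_log_mul_neg_sq_pow,
    sum_range_neg_one_pow_div_sq, catalan'_eq_neg_integral]
  ring

theorem hasSum_weighted_catalan'_partialSum {a : ℕ → ℝ} {A : ℝ} {f : ℝ → ℝ} (ha : HasSum a A)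
    (hf : ∀ x ∈ Ioc (0 : ℝ) 1, HasSum (fun n ↦ a n * (-x ^ 2) ^ n) (f x)) (c : ℝ) :
    HasSum (fun n ↦ a n * (c * ∑ j ∈ Finset.range (n + 1), (-1 : ℝ) ^ j / (2 * (j : ℝ) + 1) ^ 2
        - (-1) ^ n / (2 * (n : ℝ) + 1) ^ 2))
      (A * (c * catalan') +
        ∫ x in (0 : ℝ)..1, log x * (f x * (1 - c * x ^ 2 / (1 + x ^ 2)))) := by
  have hne : ∀ x : ℝ, 1 + x ^ 2 ≠ 0 := fun x ↦ by positivity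
  simp only [mul_sum_range_sub_eq_mul_catalan'_add_integral, mul_add]
  refine (ha.mul_right _).add ?_
  simp only [← intervalIntegral.integral_const_mul]
  refine intervalIntegral.hasSum_integral_of_dominated_convergence
    (fun n x ↦ |a n| * |log x * (1 - c * x ^ 2 / (1 + x ^ 2))|) (fun n ↦ ?_)
    (fun n ↦ .of_forall fun x hx ↦ ?_) (.of_forall fun x _ ↦ ha.summable.abs.mul_right _) ?_
    (.of_forall fun x hx ↦ ?_)
  · exact ((intervalIntegrable_log_mul
      (by fun_prop (disch := simp [hne]))).const_mul (a n)).aestronglyMeasurable_restrict_uIoc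
  · rw [norm_mul, mul_left_comm, norm_mul, norm_eq_abs, norm_eq_abs, norm_eq_abs]
    gcongr
    exact mul_le_of_le_one_left (abs_nonneg _) (abs_neg_sq_pow_le_one hx n)
  · simp only [tsum_mul_right]
    exact (intervalIntegrable_log_mul (by fun_prop (disch := simp [hne]))).abs.const_mul _
  · rw [uIoc_of_le zero_le_one] at hx
    exact (((hf x hx).mul_right (1 - c * x ^ 2 / (1 + x ^ 2))).mul_left (log x)).congr_fun
      fun n ↦ by ring

theorem intervalIntegrable_log_mul_arsinh_half_div (c : ℝ) :
    IntervalIntegrable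
      (fun x ↦ log x * (2 * arsinh (x / 2) / x * (1 - c * x ^ 2 / (1 + x ^ 2)))) volume 0 1 := by
  have hne : ∀ x : ℝ, 1 + x ^ 2 ≠ 0 := fun x ↦ by positivity
  have hslope : Continuous (dslope (fun x ↦ 2 * arsinh (x / 2)) 0) := by
    rw [← continuousOn_univ, continuousOn_dslope univ_mem]
    exact ⟨((continuous_id.div_const 2).arsinh.const_mul 2).continuousOn,
      ((differentiableAt_id.div_const 2).arsinh.const_mul 2)⟩
  refine (intervalIntegrable_log_mul (g := fun x ↦ dslope (fun x ↦ 2 * arsinh (x / 2)) 0 x *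
    (1 - c * x ^ 2 / (1 + x ^ 2))) (by fun_prop (disch := simp [hne]))).congr fun x hx ↦ ?_
  rw [uIoc_of_le zero_le_one] at hx
  simp [dslope_of_ne _ hx.1.ne', slope_def_field]

theorem integral_log_mul_arsinh_half_div_eq_zero :
    ∫ x in (0 : ℝ)..1, log x * (2 * arsinh (x / 2) / x * (1 - 12 * x ^ 2 / (1 + x ^ 2))) = 0 := by
  have hcont : Continuous fun x ↦ -trilogLadder (arsinhSubst x) :=
    (continuousOn_trilogLadder.comp_continuous continuous_arsinhSubst arsinhSubst_lt_one).neg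
  rw [intervalIntegral.integral_eq_sub_of_hasDerivAt_of_le zero_le_one hcont.continuousOn
    (fun x hx ↦ hasDerivAt_trilogLadder_arsinhSubst hx.1)
    (intervalIntegrable_log_mul_arsinh_half_div 12),
    arsinhSubst_one, trilogLadder_inv_goldenRatio, arsinhSubst_zero, trilogLadder_zero, sub_self]

end

theorem stmt_16 :
    Tendsto (fun N => ∑ n ∈ Finset.range N,
      ((2*n).choose n : ℝ) / ((2*(n:ℝ)+1) * 16^n) *
        (12 * (∑ j ∈ Finset.range (n+1), (-1:ℝ)^j / (2*(j:ℝ)+1)^2)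
          - (-1:ℝ)^n / (2*(n:ℝ)+1)^2))
      atTop (𝓝 (4 * Real.pi * catalan')) := by
  have hsum := hasSum_weighted_catalan'_partialSum hasSum_arcsinCoeff_div_four_pow
    (fun x hx ↦ hasSum_arcsinCoeff_div_four_pow_mul_neg_sq_pow hx.1.ne'
      (by rw [abs_of_pos hx.1]; linarith [hx.2])) 12
  rw [integral_log_mul_arsinh_half_div_eq_zero, add_zero,
    show Real.pi / 3 * (12 * catalan') = 4 * Real.pi * catalan' by ring] at hsum
  refine hsum.tendsto_sum_nat.congr fun N ↦ Finset.sum_congr rfl fun n _ ↦ ?_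
  rw [arcsinCoeff_div_four_pow]
end

section
/- $\sum_{n=1}^{\infty} \frac{(28n^2 - 18n + 3)(-64)^n}{n^5 \binom{2n}{n}^4 \binom{3n}{n}} = -14\,\zeta(3)$. -/
open Filter Topology

/-!
Let `Ω(a; b, c, d, e) = ∑ₖ (a + 2k) ∏ₓ (x)ₖ / (1 + a - x)ₖ`, with `x` running over `b, c, d, e`, be
the very-well-poised series of Dougall's `₅F₄` type (studied by Chu and Zhang). One telescoping
identity relates it to `Ω(a + 1; b, c, d, e + 1)`. Applying this once to each of the last three
parameters of `D(x) = Ω(3x + 1; 1/2, x + 1/2, x + 1/2, x + 1/2)` expresses `D(x)` through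
`D(x + 1)`, and the inhomogeneous part is, up to a common factor, the sum of two consecutive terms
of the series to be evaluated. Iterating from `D(0) = ∑ₖ 1/(2k+1)³ = 7/8 ζ(3)` pairs up all the
terms of that series, and the remainder decays geometrically.
-/

open Asymptotics Finset

section WellPoised

/-- The quotient of Pochhammer symbols `(b)ₖ / (1 + a - b)ₖ`, the building block of well-poised
hypergeometric series. -/
noncomputable def wellPoisedRatio (a b : ℝ) (k : ℕ) : ℝ :=
  ∏ j ∈ range k, (b + j) / (1 + a - b + j)

variable {a b : ℝ}

lemma wellPoisedRatio_succ (a b : ℝ) (k : ℕ) :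
    wellPoisedRatio a b (k + 1) = wellPoisedRatio a b k * ((b + k) / (1 + a - b + k)) :=
  prod_range_succ _ _

lemma wellPoisedRatio_nonneg (hb : 0 ≤ b) (hba : b ≤ 1 + a) (k : ℕ) :
    0 ≤ wellPoisedRatio a b k :=
  prod_nonneg fun j _ ↦ div_nonneg (by positivity) (add_nonneg (by linarith) j.cast_nonneg)

lemma wellPoisedRatio_anti {a' : ℝ} (hb : 0 ≤ b) (hba : b < 1 + a) (haa' : a ≤ a') (k : ℕ) :
    wellPoisedRatio a' b k ≤ wellPoisedRatio a b k := by
  have denom_pos (j : ℕ) : 0 < 1 + a - b + j := add_pos_of_pos_of_nonneg (by linarith) j.cast_nonneg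
  refine prod_le_prod (fun j _ ↦ div_nonneg (by positivity) ?_) fun j _ ↦
    div_le_div_of_nonneg_left (by positivity) (denom_pos j) ?_ <;> linarith [denom_pos j]

lemma wellPoisedRatio_two_mul (hb : 0 < b) (k : ℕ) :
    wellPoisedRatio (2 * b) b k = b / (b + k) := by
  induction k with
  | zero => simp [wellPoisedRatio, hb.ne']
  | succ k ih =>
    rw [wellPoisedRatio_succ, ih, show 1 + 2 * b - b + k = b + k + 1 by ring]
    push_cast
    field_simp
    ring

lemma wellPoisedRatio_le (hb : 0 < b) (hba : 2 * b ≤ a) (k : ℕ) :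
    wellPoisedRatio a b k ≤ b / (b + k) :=
  (wellPoisedRatio_anti hb.le (by linarith) hba k).trans_eq (wellPoisedRatio_two_mul hb k)

lemma wellPoisedRatio_add_one_left (hba : b < 1 + a) (k : ℕ) :
    wellPoisedRatio (a + 1) b k = wellPoisedRatio a b k * ((1 + a - b) / (1 + a - b + k)) := by
  have hpos : 0 < 1 + a - b := by linarith
  induction k with
  | zero => simp [wellPoisedRatio, hpos.ne']
  | succ k ih =>
    rw [wellPoisedRatio_succ, wellPoisedRatio_succ, ih,
      show 1 + (a + 1) - b + k = 1 + a - b + k + 1 by ring]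
    push_cast
    rw [← add_assoc]
    field_simp

lemma wellPoisedRatio_add_one_add_one (hb : 0 < b) (k : ℕ) :
    wellPoisedRatio (a + 1) (b + 1) k = wellPoisedRatio a b k * ((b + k) / b) := by
  induction k with
  | zero => simp [wellPoisedRatio, hb.ne']
  | succ k ih =>
    rw [wellPoisedRatio_succ, wellPoisedRatio_succ, ih,
      show 1 + (a + 1) - (b + 1) + k = 1 + a - b + k by ring]
    push_cast
    field_simp
    ring

/-- Euler's limit formula for `Γ` governs the growth of Pochhammer symbols. -/
lemma isBigO_wellPoisedRatio_succ (a : ℝ) (hb : 0 < b) :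
    (fun k : ℕ ↦ wellPoisedRatio a b (k + 1)) =O[atTop] fun k ↦ (k : ℝ) ^ (2 * b - a - 1) := by
  have hbdd : (fun k ↦ Real.GammaSeq (1 + a - b) k / Real.GammaSeq b k) =O[atTop]
      fun _ ↦ (1 : ℝ) :=
    ((Real.GammaSeq_tendsto_Gamma _).div (Real.GammaSeq_tendsto_Gamma b)
      (Real.Gamma_pos_of_pos hb).ne').isBigO_one ℝ
  refine (hbdd.mul (isBigO_refl (fun k : ℕ ↦ (k : ℝ) ^ (2 * b - a - 1)) _)).congr' ?_ (by simp)
  filter_upwards [eventually_gt_atTop 0] with k hk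
  have hk' : (0 : ℝ) < k := Nat.cast_pos.2 hk
  have hprod : ∏ j ∈ range (k + 1), (b + j) ≠ 0 := prod_ne_zero_iff.2 fun j _ ↦ by positivity
  rw [wellPoisedRatio, prod_div_distrib, Real.GammaSeq, Real.GammaSeq,
    show 2 * b - a - 1 = b - (1 + a - b) by ring, Real.rpow_sub hk' b]
  generalize 1 + a - b = s
  field_simp

end WellPoised

section Dougall

/-- The product of the four well-poised ratios in the general term of Dougall's series. -/
noncomputable def dougallWeight (a b c d e : ℝ) (k : ℕ) : ℝ :=
  wellPoisedRatio a b k * wellPoisedRatio a c k * wellPoisedRatio a d k * wellPoisedRatio a e k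

/-- The general term `(a + 2k) (b)ₖ(c)ₖ(d)ₖ(e)ₖ / ((1+a-b)ₖ(1+a-c)ₖ(1+a-d)ₖ(1+a-e)ₖ)` of Dougall's
very-well-poised series. -/
noncomputable def dougallTerm (a b c d e : ℝ) (k : ℕ) : ℝ :=
  (a + 2 * k) * dougallWeight a b c d e k

/-- The sum `Ω(a; b, c, d, e)` of Dougall's very-well-poised series, which converges when
`b + c + d + e < 1 + 2a`; it starts at `k = 0` and is not normalized by a factor `1 / a`. -/
noncomputable def dougallSum (a b c d e : ℝ) : ℝ := ∑' k, dougallTerm a b c d e k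

variable {a b c d e : ℝ}

lemma dougallSum_rotate (a b c d e : ℝ) : dougallSum a b c d e = dougallSum a b e c d :=
  tsum_congr fun k ↦ by unfold dougallTerm dougallWeight; ring

lemma isBigO_dougallWeight_succ (a : ℝ) (hb : 0 < b) (hc : 0 < c) (hd : 0 < d) (he : 0 < e) :
    (fun k : ℕ ↦ dougallWeight a b c d e (k + 1)) =O[atTop]
      fun k ↦ (k : ℝ) ^ (-2 * (1 + 2 * a - b - c - d - e) - 2) := by
  refine ((((isBigO_wellPoisedRatio_succ a hb).mul (isBigO_wellPoisedRatio_succ a hc)).mul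
    (isBigO_wellPoisedRatio_succ a hd)).mul (isBigO_wellPoisedRatio_succ a he)).congr' .rfl ?_
  filter_upwards [eventually_gt_atTop 0] with k hk
  simp only [← Real.rpow_add (Nat.cast_pos.2 hk : (0 : ℝ) < k)]
  ring_nf

lemma isBigO_linear_natCast (p q : ℝ) :
    (fun k : ℕ ↦ p + q * ((k + 1 : ℕ) : ℝ)) =O[atTop] fun k ↦ (k : ℝ) ^ (1 : ℝ) := by
  have hconst (r : ℝ) : (fun _ : ℕ ↦ r) =O[atTop] fun k ↦ (k : ℝ) :=
    (isLittleO_const_left.2 <| .inr <|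
      tendsto_norm_atTop_atTop.comp tendsto_natCast_atTop_atTop).isBigO
  simp only [Real.rpow_one, Nat.cast_succ]
  exact (hconst p).add (((isBigO_refl _ _).add (hconst 1)).const_mul_left q)

lemma summable_dougallTerm (hb : 0 < b) (hc : 0 < c) (hd : 0 < d) (he : 0 < e)
    (hU : 0 < 1 + 2 * a - b - c - d - e) : Summable (dougallTerm a b c d e) := by
  rw [← summable_nat_add_iff 1]
  refine summable_of_isBigO_nat (g := fun k ↦ (k : ℝ) ^ (-2 * (1 + 2 * a - b - c - d - e) - 1))
    (Real.summable_nat_rpow.2 (by linarith)) ?_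
  refine ((isBigO_linear_natCast a 2).mul (isBigO_dougallWeight_succ a hb hc hd he)).congr' .rfl ?_
  filter_upwards [eventually_gt_atTop 0] with k hk
  rw [← Real.rpow_add (Nat.cast_pos.2 hk : (0 : ℝ) < k)]
  ring_nf

/-- The certificate telescoping the difference between `Ω(a; b, c, d, e)` and the appropriate
multiple of `Ω(a + 1; b, c, d, e + 1)`. -/
noncomputable def dougallCertificate (a b c d e : ℝ) (k : ℕ) : ℝ :=
  (a - e + k) * (1 + 2 * a - b - c - d + k) * dougallWeight a b c d e k

lemma tendsto_dougallCertificate (hb : 0 < b) (hc : 0 < c) (hd : 0 < d) (he : 0 < e)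
    (hU : 0 < 1 + 2 * a - b - c - d - e) :
    Tendsto (dougallCertificate a b c d e) atTop (𝓝 0) := by
  rw [← tendsto_add_atTop_iff_nat 1]
  have hdecay : Tendsto (fun k : ℕ ↦ (k : ℝ) ^ (-(2 * (1 + 2 * a - b - c - d - e)))) atTop (𝓝 0) :=
    (tendsto_rpow_neg_atTop (by linarith)).comp tendsto_natCast_atTop_atTop
  refine IsBigO.trans_tendsto ?_ hdecay
  refine (((isBigO_linear_natCast (a - e) 1).mul
    (isBigO_linear_natCast (1 + 2 * a - b - c - d) 1)).mul
    (isBigO_dougallWeight_succ a hb hc hd he)).congr' ?_ ?_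
  · exact .of_forall fun k ↦ by simp only [dougallCertificate, one_mul]
  · filter_upwards [eventually_gt_atTop 0] with k hk
    simp only [← Real.rpow_add (Nat.cast_pos.2 hk : (0 : ℝ) < k)]
    ring_nf

lemma dougallTerm_sub_eq_certificate_sub (hb : b < 1 + a) (hc : c < 1 + a) (hd : d < 1 + a)
    (he : e ∈ Set.Ioo 0 (1 + a)) (k : ℕ) :
    (1 + 2 * a - b - c - d - e) * dougallTerm a b c d e k -
        e * (1 + a - b - c) * (1 + a - b - d) * (1 + a - c - d) /
          ((1 + a - b) * (1 + a - c) * (1 + a - d)) * dougallTerm (a + 1) b c d (e + 1) k =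
      dougallCertificate a b c d e k - dougallCertificate a b c d e (k + 1) := by
  have hb' : 0 < 1 + a - b := by linarith
  have hc' : 0 < 1 + a - c := by linarith
  have hd' : 0 < 1 + a - d := by linarith
  have he' : 0 < 1 + a - e := by linarith [he.2]
  have he₀ : e ≠ 0 := he.1.ne'
  simp only [dougallTerm, dougallCertificate, dougallWeight, wellPoisedRatio_succ,
    wellPoisedRatio_add_one_left hb, wellPoisedRatio_add_one_left hc,
    wellPoisedRatio_add_one_left hd, wellPoisedRatio_add_one_add_one he.1]
  push_cast
  field_simp
  ring

theorem dougallSum_recurrence (hb : b ∈ Set.Ioo 0 (1 + a)) (hc : c ∈ Set.Ioo 0 (1 + a))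
    (hd : d ∈ Set.Ioo 0 (1 + a)) (he : e ∈ Set.Ioo 0 (1 + a))
    (hU : 0 < 1 + 2 * a - b - c - d - e) :
    (1 + 2 * a - b - c - d - e) * dougallSum a b c d e =
      (a - e) * (1 + 2 * a - b - c - d) +
        e * (1 + a - b - c) * (1 + a - b - d) * (1 + a - c - d) /
          ((1 + a - b) * (1 + a - c) * (1 + a - d)) * dougallSum (a + 1) b c d (e + 1) := by
  have hsum := (summable_dougallTerm hb.1 hc.1 hd.1 he.1 hU).hasSum
  have hsum' : Summable (dougallTerm (a + 1) b c d (e + 1)) :=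
    summable_dougallTerm hb.1 hc.1 hd.1 (by linarith [he.1]) (by linarith)
  have hdiff := ((hsum.mul_left (1 + 2 * a - b - c - d - e)).sub (hsum'.hasSum.mul_left
    (e * (1 + a - b - c) * (1 + a - b - d) * (1 + a - c - d) /
      ((1 + a - b) * (1 + a - c) * (1 + a - d))))).tendsto_sum_nat
  simp only [dougallTerm_sub_eq_certificate_sub hb.2 hc.2 hd.2 he, sum_range_sub'] at hdiff
  have hlim := tendsto_const_nhds (x := dougallCertificate a b c d e 0) |>.sub
    (tendsto_dougallCertificate hb.1 hc.1 hd.1 he.1 hU)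
  have hzero : dougallCertificate a b c d e 0 = (a - e) * (1 + 2 * a - b - c - d) := by
    simp [dougallCertificate, dougallWeight, wellPoisedRatio]
  have heq := tendsto_nhds_unique hdiff hlim
  rw [hzero, sub_zero] at heq
  simp only [dougallSum]
  linarith

end Dougall

section Diagonal

/-- The one-parameter family `Ω(3x + 1; 1/2, x + 1/2, x + 1/2, x + 1/2)` of Dougall sums. -/
noncomputable def diagonalDougallSum (x : ℝ) : ℝ :=
  dougallSum (3 * x + 1) (1 / 2) (x + 1 / 2) (x + 1 / 2) (x + 1 / 2)

/-- The quadratic factor `28n² - 18n + 3` of the summand, at `n = x + 1`. -/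
def quadraticFactor (x : ℝ) : ℝ := 28 * (x + 1) ^ 2 - 18 * (x + 1) + 3

/-- The ratio of consecutive values of `(-64)ⁿ / (n⁵ (2n choose n)⁴ (3n choose n))`, passing from
`n = x + 1` to `n = x + 2`. -/
noncomputable def hyperRatio (x : ℝ) : ℝ :=
  -8 * (x + 1) ^ 5 / (3 * (2 * x + 3) ^ 3 * (3 * x + 4) * (3 * x + 5))

lemma diagonalDougallSum_eq_dougallSum_raise_one {x : ℝ} (hx : 0 ≤ x) :
    (3 * x + 1) * diagonalDougallSum x = (4 * x + 1) * (8 * x + 3) / 4 +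
      4 * (2 * x + 1) ^ 2 * (x + 1) / (3 * (4 * x + 3) ^ 2) *
        dougallSum (3 * x + 2) (1 / 2) (x + 3 / 2) (x + 1 / 2) (x + 1 / 2) := by
  have h := dougallSum_recurrence (a := 3 * x + 1) (b := 1 / 2) (c := x + 1 / 2)
    (d := x + 1 / 2) (e := x + 1 / 2) ⟨by linarith, by linarith⟩ ⟨by linarith, by linarith⟩
    ⟨by linarith, by linarith⟩ ⟨by linarith, by linarith⟩ (by linarith)
  rw [dougallSum_rotate _ _ _ _ (x + 1 / 2 + 1), show 3 * x + 1 + 1 = 3 * x + 2 by ring,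
    show x + 1 / 2 + 1 = x + 3 / 2 by ring,
    show 1 + (3 * x + 1) - 1 / 2 = 3 * (2 * x + 1) / 2 by ring,
    show 1 + (3 * x + 1) - (x + 1 / 2) = (4 * x + 3) / 2 by ring] at h
  unfold diagonalDougallSum
  linear_combination (norm := (field_simp; ring)) h

lemma dougallSum_raise_one_eq_raise_two {x : ℝ} (hx : 0 ≤ x) :
    (3 * x + 2) * dougallSum (3 * x + 2) (1 / 2) (x + 3 / 2) (x + 1 / 2) (x + 1 / 2) =
      (4 * x + 3) * (8 * x + 5) / 4 +
      8 * (2 * x + 1) ^ 2 * (x + 1) ^ 2 / ((6 * x + 5) * (4 * x + 3) * (4 * x + 5)) *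
        dougallSum (3 * x + 3) (1 / 2) (x + 3 / 2) (x + 3 / 2) (x + 1 / 2) := by
  have h := dougallSum_recurrence (a := 3 * x + 2) (b := 1 / 2) (c := x + 3 / 2)
    (d := x + 1 / 2) (e := x + 1 / 2) ⟨by linarith, by linarith⟩ ⟨by linarith, by linarith⟩
    ⟨by linarith, by linarith⟩ ⟨by linarith, by linarith⟩ (by linarith)
  rw [dougallSum_rotate _ _ _ _ (x + 1 / 2 + 1), show 3 * x + 2 + 1 = 3 * x + 3 by ring,
    show x + 1 / 2 + 1 = x + 3 / 2 by ring, show 1 + (3 * x + 2) - 1 / 2 = (6 * x + 5) / 2 by ring,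
    show 1 + (3 * x + 2) - (x + 3 / 2) = (4 * x + 3) / 2 by ring,
    show 1 + (3 * x + 2) - (x + 1 / 2) = (4 * x + 5) / 2 by ring] at h
  linear_combination (norm := (field_simp; ring)) h

lemma dougallSum_raise_two_eq_diagonalDougallSum_add_one {x : ℝ} (hx : 0 ≤ x) :
    (3 * x + 3) * dougallSum (3 * x + 3) (1 / 2) (x + 3 / 2) (x + 3 / 2) (x + 1 / 2) =
      (4 * x + 5) * (8 * x + 7) / 4 +
      16 * (2 * x + 1) * (x + 1) ^ 3 / ((6 * x + 7) * (4 * x + 5) ^ 2) *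
        diagonalDougallSum (x + 1) := by
  have h := dougallSum_recurrence (a := 3 * x + 3) (b := 1 / 2) (c := x + 3 / 2)
    (d := x + 3 / 2) (e := x + 1 / 2) ⟨by linarith, by linarith⟩ ⟨by linarith, by linarith⟩
    ⟨by linarith, by linarith⟩ ⟨by linarith, by linarith⟩ (by linarith)
  rw [show x + 1 / 2 + 1 = x + 3 / 2 by ring,
    show 1 + (3 * x + 3) - 1 / 2 = (6 * x + 7) / 2 by ring,
    show 1 + (3 * x + 3) - (x + 3 / 2) = (4 * x + 5) / 2 by ring] at h
  rw [diagonalDougallSum, show 3 * (x + 1) + 1 = 3 * x + 3 + 1 by ring,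
    show x + 1 + 1 / 2 = x + 3 / 2 by ring]
  linear_combination (norm := (field_simp; ring)) h

theorem diagonalDougallSum_recurrence {x : ℝ} (hx : 0 ≤ x) :
    12 * (3 * x + 1) * diagonalDougallSum x =
      quadraticFactor (2 * x) + hyperRatio (2 * x) * (quadraticFactor (2 * x + 1) +
        hyperRatio (2 * x + 1) * (12 * (3 * x + 4) * diagonalDougallSum (x + 1))) := by
  have h₁ := diagonalDougallSum_eq_dougallSum_raise_one hx
  have h₂ := dougallSum_raise_one_eq_raise_two hx
  have h₃ := dougallSum_raise_two_eq_diagonalDougallSum_add_one hx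
  rw [mul_comm, ← eq_div_iff (by positivity)] at h₂ h₃
  rw [h₃] at h₂
  rw [mul_assoc, h₁, h₂]
  unfold quadraticFactor hyperRatio
  rw [show 3 * (2 * x) + 4 = 2 * (3 * x + 2) by ring,
    show 3 * (2 * x + 1) + 5 = 2 * (3 * x + 4) by ring,
    show 2 * (2 * x + 1) + 3 = 4 * x + 5 by ring,
    show 2 * (2 * x) + 3 = 4 * x + 3 by ring,
    show 3 * (2 * x) + 5 = 6 * x + 5 by ring,
    show 3 * (2 * x + 1) + 4 = 6 * x + 7 by ring]
  field_simp
  ring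

end Diagonal

section OddCubes

lemma dougallTerm_one_half (k : ℕ) :
    dougallTerm 1 (1 / 2) (1 / 2) (1 / 2) (1 / 2) k = 1 / (2 * (k : ℝ) + 1) ^ 3 := by
  have hratio : wellPoisedRatio 1 (1 / 2) k = 1 / (2 * k + 1) := by
    have h := wellPoisedRatio_two_mul (b := 1 / 2) (by norm_num) k
    rw [mul_one_div_cancel two_ne_zero] at h
    rw [h]
    field_simp
    ring
  rw [dougallTerm, dougallWeight, hratio]
  field_simp
  ring

theorem hasSum_one_div_odd_pow {s : ℕ} (hs : 1 < s) :
    HasSum (fun k : ℕ ↦ 1 / (2 * (k : ℝ) + 1) ^ s) ((1 - 1 / 2 ^ s) * zeta s) := by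
  have hsummable : Summable fun n : ℕ ↦ 1 / ((n : ℝ) + 1) ^ s := by
    exact_mod_cast (summable_nat_add_iff 1).2 (Real.summable_one_div_nat_pow.2 hs)
  have heven : (fun k : ℕ ↦ 1 / (((2 * k + 1 : ℕ) : ℝ) + 1) ^ s) =
      fun k : ℕ ↦ 1 / 2 ^ s * (1 / ((k : ℝ) + 1) ^ s) := by
    funext k
    push_cast
    rw [show 2 * (k : ℝ) + 1 + 1 = 2 * (k + 1) by ring, mul_pow, one_div_mul_one_div]
  have hodd : Summable fun k : ℕ ↦ 1 / (((2 * k : ℕ) : ℝ) + 1) ^ s :=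
    hsummable.comp_injective (i := fun k ↦ 2 * k) (mul_right_injective₀ two_ne_zero)
  have hsplit := tsum_even_add_odd (f := fun n : ℕ ↦ 1 / ((n : ℝ) + 1) ^ s) hodd
    (by simpa only [heven] using hsummable.mul_left (1 / 2 ^ s))
  rw [heven, tsum_mul_left] at hsplit
  convert hodd.hasSum using 1
  · push_cast
    rfl
  · unfold zeta
    linarith

lemma diagonalDougallSum_zero : diagonalDougallSum 0 = 7 / 8 * zeta 3 := by
  have h := (hasSum_one_div_odd_pow (s := 3) (by norm_num)).tsum_eq
  simp only [diagonalDougallSum, dougallSum, mul_zero, zero_add, dougallTerm_one_half, h]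
  norm_num

end OddCubes

section DiagonalBound

lemma wellPoisedRatio_diagonal_le {x : ℝ} (hx : 0 ≤ x) (k : ℕ) :
    wellPoisedRatio (3 * x + 1) (x + 1 / 2) k ≤ (2 * x + 1) / (2 * k + 1) := by
  calc wellPoisedRatio (3 * x + 1) (x + 1 / 2) k
      ≤ (x + 1 / 2) / (x + 1 / 2 + k) := wellPoisedRatio_le (by linarith) (by linarith) k
    _ = (2 * x + 1) / (2 * x + 1 + 2 * k) := by field_simp
    _ ≤ (2 * x + 1) / (2 * k + 1) :=
        div_le_div_of_nonneg_left (by positivity) (by positivity) (by linarith)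

lemma wellPoisedRatio_half_le {x : ℝ} (hx : 0 ≤ x) (k : ℕ) :
    wellPoisedRatio (3 * x + 1) (1 / 2) k ≤ 1 / (2 * k + 1) := by
  calc wellPoisedRatio (3 * x + 1) (1 / 2) k
      ≤ 1 / 2 / (1 / 2 + k) := wellPoisedRatio_le (by norm_num) (by linarith) k
    _ = 1 / (2 * k + 1) := by
        field_simp
        ring

lemma dougallTerm_diagonal_nonneg {x : ℝ} (hx : 0 ≤ x) (k : ℕ) :
    0 ≤ dougallTerm (3 * x + 1) (1 / 2) (x + 1 / 2) (x + 1 / 2) (x + 1 / 2) k := by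
  have hdiag := wellPoisedRatio_nonneg (a := 3 * x + 1) (b := x + 1 / 2) (by linarith)
    (by linarith) k
  have hhalf := wellPoisedRatio_nonneg (a := 3 * x + 1) (b := 1 / 2) (by linarith) (by linarith) k
  unfold dougallTerm dougallWeight
  positivity

lemma dougallTerm_diagonal_le {x : ℝ} (hx : 0 ≤ x) (k : ℕ) :
    dougallTerm (3 * x + 1) (1 / 2) (x + 1 / 2) (x + 1 / 2) (x + 1 / 2) k ≤
      (3 * x + 1) * (2 * x + 1) ^ 3 * (1 / (2 * (k : ℝ) + 1) ^ 3) := by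
  have hdiag := wellPoisedRatio_diagonal_le hx k
  have hdiag₀ := wellPoisedRatio_nonneg (a := 3 * x + 1) (b := x + 1 / 2) (by linarith)
    (by linarith) k
  have hhalf := wellPoisedRatio_half_le hx k
  have hhalf₀ := wellPoisedRatio_nonneg (a := 3 * x + 1) (b := 1 / 2) (by linarith) (by linarith) k
  have hlinear : 3 * x + 1 + 2 * k ≤ (3 * x + 1) * (2 * k + 1) := by
    linarith [mul_nonneg hx (k.cast_nonneg (α := ℝ))]
  calc dougallTerm (3 * x + 1) (1 / 2) (x + 1 / 2) (x + 1 / 2) (x + 1 / 2) k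
      ≤ (3 * x + 1) * (2 * k + 1) * (1 / (2 * k + 1) * ((2 * x + 1) / (2 * k + 1)) *
          ((2 * x + 1) / (2 * k + 1)) * ((2 * x + 1) / (2 * k + 1))) := by
        unfold dougallTerm dougallWeight
        gcongr
    _ = (3 * x + 1) * (2 * x + 1) ^ 3 * (1 / (2 * (k : ℝ) + 1) ^ 3) := by field_simp

lemma diagonalDougallSum_nonneg {x : ℝ} (hx : 0 ≤ x) : 0 ≤ diagonalDougallSum x :=
  tsum_nonneg (dougallTerm_diagonal_nonneg hx)

lemma diagonalDougallSum_le {x : ℝ} (hx : 0 ≤ x) :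
    diagonalDougallSum x ≤ (3 * x + 1) * (2 * x + 1) ^ 3 * (7 / 8 * zeta 3) := by
  have hbound := (hasSum_one_div_odd_pow (s := 3) (by norm_num)).mul_left
    ((3 * x + 1) * (2 * x + 1) ^ 3)
  have hsummable := Summable.of_nonneg_of_le (dougallTerm_diagonal_nonneg hx)
    (dougallTerm_diagonal_le hx) hbound.summable
  calc diagonalDougallSum x
      ≤ (3 * x + 1) * (2 * x + 1) ^ 3 * ((1 - 1 / 2 ^ 3) * zeta 3) :=
        hasSum_le (dougallTerm_diagonal_le hx) hsummable.hasSum hbound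
    _ = (3 * x + 1) * (2 * x + 1) ^ 3 * (7 / 8 * zeta 3) := by ring

end DiagonalBound

section Series

/-- The hypergeometric factor `(-64)ᵐ / (m⁵ (2m choose m)⁴ (3m choose m))` of the summand, at
`m = n + 1`. -/
noncomputable def hyperFactor (n : ℕ) : ℝ :=
  (-64) ^ (n + 1) / (((n : ℝ) + 1) ^ 5 * ((2 * (n + 1)).choose (n + 1) : ℝ) ^ 4 *
    ((3 * (n + 1)).choose (n + 1) : ℝ))

lemma add_one_mul_choose_three_mul_add_one (m : ℕ) :
    2 * (m + 1) * (2 * m + 1) * (3 * (m + 1)).choose (m + 1) =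
      3 * (3 * m + 1) * (3 * m + 2) * (3 * m).choose m := by
  have h₁ := Nat.choose_mul_succ_eq (3 * m) m
  have h₂ := Nat.choose_mul_succ_eq (3 * m + 1) m
  have h₃ := Nat.add_one_mul_choose_eq (3 * m + 2) m
  rw [show 3 * m + 1 - m = 2 * m + 1 by lia] at h₁
  rw [show 3 * m + 1 + 1 - m = 2 * m + 2 by lia] at h₂
  rw [show 3 * (m + 1) = 3 * m + 2 + 1 by ring]
  zify at h₁ h₂ h₃ ⊢
  linear_combination
    -2 * (2 * m + 1 : ℤ) * h₃ - 3 * (2 * m + 1) * h₂ - 3 * (3 * m + 2) * h₁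

lemma hyperFactor_zero : hyperFactor 0 = -4 / 3 := by
  norm_num [hyperFactor, Nat.choose]

lemma hyperFactor_succ (n : ℕ) : hyperFactor (n + 1) = hyperFactor n * hyperRatio n := by
  have h₂ : ((n : ℝ) + 2) * ((2 * (n + 1 + 1)).choose (n + 1 + 1) : ℝ) =
      2 * (2 * n + 3) * ((2 * (n + 1)).choose (n + 1) : ℝ) := by
    have h := Nat.succ_mul_centralBinom_succ (n + 1)
    simp only [Nat.centralBinom_eq_two_mul_choose] at h
    have h' := congrArg (Nat.cast (R := ℝ)) h
    push_cast at h'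
    linear_combination h'
  have h₃ : 2 * ((n : ℝ) + 2) * (2 * n + 3) * ((3 * (n + 1 + 1)).choose (n + 1 + 1) : ℝ) =
      3 * (3 * n + 4) * (3 * n + 5) * ((3 * (n + 1)).choose (n + 1) : ℝ) := by
    have h := congrArg (Nat.cast (R := ℝ)) (add_one_mul_choose_three_mul_add_one (n + 1))
    push_cast at h
    linear_combination h
  have hpos₂ : ((2 * (n + 1)).choose (n + 1) : ℝ) ≠ 0 := by
    exact_mod_cast (Nat.choose_pos (by lia)).ne'
  have hpos₃ : ((3 * (n + 1)).choose (n + 1) : ℝ) ≠ 0 := by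
    exact_mod_cast (Nat.choose_pos (by lia)).ne'
  rw [mul_comm, ← eq_div_iff (by positivity)] at h₂ h₃
  unfold hyperFactor hyperRatio
  rw [h₂, h₃, pow_succ (-64 : ℝ) (n + 1)]
  push_cast
  rw [add_assoc (n : ℝ) 1 1, one_add_one_eq_two]
  field_simp
  ring

lemma abs_hyperRatio_le {x : ℝ} (hx : 0 ≤ x) : |hyperRatio x| ≤ 1 / 27 := by
  have hdenom : 3 * (2 * (x + 1)) ^ 3 * (3 * (x + 1)) * (3 * (x + 1)) ≤
      3 * (2 * x + 3) ^ 3 * (3 * x + 4) * (3 * x + 5) := by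
    gcongr <;> linarith
  rw [hyperRatio, neg_mul, neg_div, abs_neg, abs_of_nonneg (by positivity),
    div_le_div_iff₀ (by positivity) (by norm_num)]
  linarith

lemma abs_hyperFactor_le (n : ℕ) : |hyperFactor n| ≤ 4 / 3 * (1 / 27) ^ n := by
  induction n with
  | zero => norm_num [hyperFactor_zero, abs_div]
  | succ n ih =>
    rw [hyperFactor_succ, abs_mul, pow_succ, ← mul_assoc]
    exact mul_le_mul ih (abs_hyperRatio_le n.cast_nonneg) (abs_nonneg _) (by positivity)

lemma summable_quadraticFactor_mul_hyperFactor :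
    Summable fun n : ℕ ↦ quadraticFactor n * hyperFactor n := by
  refine .of_norm_bounded (g := fun n ↦ 28 * (4 / 3) * (4 / 27 : ℝ) ^ n)
    ((summable_geometric_of_lt_one (by norm_num) (by norm_num)).mul_left _) fun n ↦ ?_
  have hexp : ((n : ℝ) + 1) ^ 2 ≤ 4 ^ n := by
    have h : (n : ℝ) + 1 ≤ 2 ^ n := by exact_mod_cast Nat.lt_two_pow_self (n := n)
    calc ((n : ℝ) + 1) ^ 2 ≤ (2 ^ n) ^ 2 := by gcongr
      _ = 4 ^ n := by rw [pow_right_comm]; norm_num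
  have hquad : |quadraticFactor n| ≤ 28 * 4 ^ n := by
    rw [quadraticFactor, abs_le]
    constructor <;> nlinarith [n.cast_nonneg (α := ℝ)]
  calc ‖quadraticFactor n * hyperFactor n‖
      ≤ (28 * 4 ^ n) * (4 / 3 * (1 / 27) ^ n) := by
        rw [Real.norm_eq_abs, abs_mul]
        gcongr
        exact abs_hyperFactor_le n
    _ = 28 * (4 / 3) * (4 / 27) ^ n := by
        rw [div_pow 4 27, div_pow 1 27, one_pow]
        ring

/-- What remains of the series once its first `2N` terms have been summed. -/
noncomputable def hyperRemainder (N : ℕ) : ℝ :=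
  12 * (3 * N + 1) * hyperFactor (2 * N) * diagonalDougallSum N

lemma hyperRemainder_zero : hyperRemainder 0 = -(14 * zeta 3) := by
  simp only [hyperRemainder, Nat.cast_zero, mul_zero, hyperFactor_zero, diagonalDougallSum_zero]
  ring

lemma hyperRemainder_sub_succ (N : ℕ) :
    hyperRemainder N - hyperRemainder (N + 1) =
      quadraticFactor (2 * N : ℕ) * hyperFactor (2 * N) +
        quadraticFactor (2 * N + 1 : ℕ) * hyperFactor (2 * N + 1) := by
  have hrec := diagonalDougallSum_recurrence (N.cast_nonneg (α := ℝ))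
  simp only [hyperRemainder, mul_add_one, hyperFactor_succ]
  push_cast
  linear_combination hyperFactor (2 * N) * hrec

lemma sum_range_two_mul_eq_hyperRemainder_sub (N : ℕ) :
    ∑ n ∈ range (2 * N), quadraticFactor n * hyperFactor n =
      hyperRemainder 0 - hyperRemainder N := by
  induction N with
  | zero => simp
  | succ N ih =>
    rw [mul_add_one, sum_range_succ, sum_range_succ, ih]
    linarith [hyperRemainder_sub_succ N]

lemma tendsto_hyperRemainder : Tendsto hyperRemainder atTop (𝓝 0) := by
  have hgeom : Tendsto (fun N : ℕ ↦ 14 * zeta 3 * (16 / 27 : ℝ) ^ N) atTop (𝓝 0) := by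
    simpa using (tendsto_pow_atTop_nhds_zero_of_lt_one (by norm_num : (0 : ℝ) ≤ 16 / 27)
      (by norm_num)).const_mul (14 * zeta 3)
  refine squeeze_zero_norm (fun N ↦ ?_) hgeom
  have hN : (0 : ℝ) ≤ N := N.cast_nonneg
  have hfour : 3 * (N : ℝ) + 1 ≤ 4 ^ N := by
    calc 3 * (N : ℝ) + 1 = 1 + N * 3 := by ring
      _ ≤ (1 + 3) ^ N := one_add_mul_le_pow (by norm_num) N
      _ = 4 ^ N := by norm_num
  have hthree : 2 * (N : ℝ) + 1 ≤ 3 ^ N := by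
    calc 2 * (N : ℝ) + 1 = 1 + N * 2 := by ring
      _ ≤ (1 + 2) ^ N := one_add_mul_le_pow (by norm_num) N
      _ = 3 ^ N := by norm_num
  have hzeta : 0 ≤ zeta 3 := tsum_nonneg fun n ↦ by positivity
  calc ‖hyperRemainder N‖
      = 12 * (3 * N + 1) * |hyperFactor (2 * N)| * diagonalDougallSum N := by
        rw [hyperRemainder, Real.norm_eq_abs, abs_mul, abs_mul,
          abs_of_nonneg (diagonalDougallSum_nonneg hN), abs_of_nonneg (by positivity)]
    _ ≤ 12 * 4 ^ N * (4 / 3 * (1 / 27) ^ (2 * N)) * (4 ^ N * (3 ^ N) ^ 3 * (7 / 8 * zeta 3)) := by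
        gcongr
        · exact diagonalDougallSum_nonneg hN
        · exact abs_hyperFactor_le _
        · exact (diagonalDougallSum_le hN).trans (by gcongr)
    _ = 14 * zeta 3 * (4 * (1 / 27) ^ 2 * 4 * 3 ^ 3) ^ N := by
        simp only [mul_pow, ← pow_mul]
        ring
    _ = 14 * zeta 3 * (16 / 27) ^ N := by norm_num

theorem hasSum_quadraticFactor_mul_hyperFactor :
    HasSum (fun n : ℕ ↦ quadraticFactor n * hyperFactor n) (-(14 * zeta 3)) := by
  have hsum := summable_quadraticFactor_mul_hyperFactor.hasSum
  have heven := hsum.tendsto_sum_nat.comp (tendsto_id.const_mul_atTop' two_pos)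
  have hremainder := (tendsto_hyperRemainder.const_sub (hyperRemainder 0)).congr fun N ↦
    (sum_range_two_mul_eq_hyperRemainder_sub N).symm
  rwa [tendsto_nhds_unique heven hremainder, hyperRemainder_zero, sub_zero] at hsum

end Series

theorem stmt_18 :
    Tendsto (fun N => ∑ n ∈ Finset.range N,
      ((28 * ((n:ℝ)+1)^2 - 18 * ((n:ℝ)+1) + 3) * (-64:ℝ)^(n+1)) /
        (((n:ℝ)+1)^5 * ((2*(n+1)).choose (n+1) : ℝ)^4 * ((3*(n+1)).choose (n+1) : ℝ)))
      atTop (𝓝 (-(14 * zeta 3))) := by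
  refine hasSum_quadraticFactor_mul_hyperFactor.tendsto_sum_nat.congr fun N ↦
    sum_congr rfl fun n _ ↦ ?_
  rw [quadraticFactor, hyperFactor, mul_div_assoc]
end
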